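/- arXiv:math/0403400 — 2 statements merged into one kernel-verified Lean document; each statement's English description precedes it below -/
import Mathlib

section
/- In NCP(e,1,n), every partition is either long (0 lies in the convex hull of exactly one of its parts) or short, and the Kreweras complement map u ↦ ū exchanges long and short elements; consequently the number of long elements of NCP(e,1,n) equals the number of short elements. -/
/-!
A long element has only one long part because two parts whose convex hulls share `0` coincide. For
the rest, put `N = en`, number the points of `μ_N` as `ζ_N^k` with `0 ≤ k < N`, and call two points
in one part of `u` a chord of `u`.

The Kreweras complement has a geometric description (`krew`): label the arc `(i-1, i)` by `i`, and
put `i` and `j` together when no chord of `u` separates their arcs. This visibly defines a partition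
of `μ_N`, which is non-crossing because a chord separating two classes also separates their convex
hulls (`krew_noncrossing`), and `μ_e`-invariant when `u` is (`krew_invariant`). The link with the
description by permutations is that `σ_u(i)` and `i + 1` always lie in the same class
(`sameGap_succ`). It follows that `u` can be recovered from its complement (`samePart_of_gaps`), so
`krew` is injective on `NCP(e,1,n)`, and that any `w` with `σ_w σ_u = σ_triv` has its parts inside
the classes of `krew N u`.

A part containing two distinct points of the same `μ_e`-orbit is long, and a long part is `μ_e`-invariant.

* An element and its complement are not both long (`not_both_long`): the first would have a chord
  from `r` to `r + n` with `r < n`, the second a chord from `j` to `j + n` with `j < n`, and the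
  first chord separates the arcs of the second.
* They are not both short (`not_both_short`): a short element has a transversal of the `μ_e`-action
  on `μ_N` which is a union of parts, so the product of `σ_u(z)/z` over a transversal is `1`. If
  this held for both, the relation `σ_w σ_u = ζ_N` would give `ζ_N^n = 1`, which is false for
  `e ≥ 2`.

Hence complementation exchanges long and short elements, and `krew` injects the finite set of long
elements into that of short elements and conversely.
-/

open Set

noncomputable section
open scoped Classical

/-- `u` is a set-theoretical partition of the set `x ⊆ ℂ`. -/
def IsPartitionOf (x : Set ℂ) (u : Set (Set ℂ)) : Prop :=
  (∀ a ∈ u, a.Nonempty ∧ a ⊆ x) ∧ ∀ z ∈ x, ∃! a, a ∈ u ∧ z ∈ a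

/-- The refinement order on partitions. -/
def Refines (u v : Set (Set ℂ)) : Prop :=
  ∀ a ∈ u, ∃ b ∈ v, a ⊆ b

/-- A partition is non-crossing if the convex hulls of two parts can only meet
when the parts are equal. -/
def IsNoncrossing (u : Set (Set ℂ)) : Prop :=
  ∀ a ∈ u, ∀ b ∈ u, (convexHull ℝ a ∩ convexHull ℝ b).Nonempty → a = b

/-- The set-theoretical meet of two partitions: parts are the nonempty
intersections of parts. -/
def meetParts (u v : Set (Set ℂ)) : Set (Set ℂ) :=
  {s | s.Nonempty ∧ ∃ a ∈ u, ∃ b ∈ v, s = a ∩ b}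

/-- The set of `n`-th roots of unity. -/
def mu (n : ℕ) : Set ℂ := {z : ℂ | z ^ n = 1}

/-- `ζ_n = exp(2iπ/n)`. -/
def zeta (n : ℕ) : ℂ := Complex.exp (2 * (Real.pi : ℂ) * Complex.I / (n : ℂ))

/-- Multiplication of a partition by a complex constant. -/
def rotate (c : ℂ) (u : Set (Set ℂ)) : Set (Set ℂ) :=
  (fun a => (fun z => c * z) '' a) '' u

/-- Invariance of a partition under multiplication by the group `μ_e`. -/
def MuInvariant (e : ℕ) (u : Set (Set ℂ)) : Prop :=
  ∀ ζ : ℂ, ζ ^ e = 1 → rotate ζ u = u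

/-- `NCP(e,1,n)`: non-crossing partitions of `μ_{en}` fixed by the `μ_e`-action. -/
def NCPmu (e n : ℕ) : Set (Set (Set ℂ)) :=
  {u | IsPartitionOf (mu (e * n)) u ∧ IsNoncrossing u ∧ MuInvariant e u}

/-- A partition is long if `0` lies in the convex hull of one of its parts. -/
def IsLong (u : Set (Set ℂ)) : Prop :=
  ∃ a ∈ u, (0 : ℂ) ∈ convexHull ℝ a

/-- The partition `u^♭` obtained by forgetting `0`. -/
def flatNCP (u : Set (Set ℂ)) : Set (Set ℂ) :=
  {s | s.Nonempty ∧ ∃ a ∈ u, s = a \ {0}}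

/-- `NCP(e,e,n+1)`: non-crossing partitions of `μ_{en} ∪ {0}` such that the
partition obtained by forgetting `0` is `μ_e`-invariant. -/
def NCPee (e n : ℕ) : Set (Set (Set ℂ)) :=
  {u | IsPartitionOf (insert 0 (mu (e * n))) u ∧ IsNoncrossing u ∧
    MuInvariant e (flatNCP u)}

/-- The trivial (one-block) partition of `μ_{en} ∪ {0}`. -/
def trivEE (e n : ℕ) : Set (Set ℂ) := {insert 0 (mu (e * n))}

/-- The discrete partition of `μ_n`. -/
def discMu (n : ℕ) : Set (Set ℂ) := {s | ∃ z ∈ mu n, s = {z}}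

/-- `z'` is the counterclockwise successor of `z` on the boundary of the convex
set `b` (all remaining points of `b` are strictly on the left of the directed
line from `z` to `z'`). -/
def ccwSucc (b : Set ℂ) (z z' : ℂ) : Prop :=
  z ∈ b ∧ z' ∈ b ∧ z ≠ z' ∧
    ∀ w ∈ b, w ≠ z → w ≠ z' →
      0 < ((z' - z).re * (w - z).im - (z' - z).im * (w - z).re)

/-- `σ` is the permutation associated with a partition `u` (of a set in convex
position), sending each element of a part to its counterclockwise successor in
that part. -/
def IsSuccMapOn (u : Set (Set ℂ)) (σ : ℂ → ℂ) : Prop :=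
  ∀ b ∈ u, ∀ z ∈ b, (b = {z} → σ z = z) ∧ (b ≠ {z} → ccwSucc b z (σ z))

/-- Restriction of a partition to the subset `X`. -/
def resTo (X : Set ℂ) (u : Set (Set ℂ)) : Set (Set ℂ) :=
  {s | s.Nonempty ∧ ∃ a ∈ u, s = a ∩ X}

/-- `w` is the (classical) Kreweras complement of `u` in `v`, for partitions of
a subset `X ⊆ ℂ` in convex position: it is characterized by
`σ_u σ_w = σ_v` (composition of motions). -/
def KrewRel (X : Set ℂ) (u v w : Set (Set ℂ)) : Prop :=
  Refines u v ∧ Refines w v ∧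
    ∃ σu σv σw : ℂ → ℂ, IsSuccMapOn u σu ∧ IsSuccMapOn v σv ∧ IsSuccMapOn w σw ∧
      ∀ z ∈ X, σw (σu z) = σv z

/-- An element of `NCP(e,e,n+1)` is symmetric if `{0}` is a part (short
symmetric) or its flat is long (long symmetric); otherwise it is asymmetric. -/
def SymmPart (u : Set (Set ℂ)) : Prop :=
  ({0} : Set ℂ) ∈ u ∨ IsLong (flatNCP u)

/-- The map `* : NCP(e,1,n) → NCP(e,e,n+1)`: add `{0}` as a singleton part if
`u` is short, add `0` to the long part if `u` is long. -/
def starNCP (u : Set (Set ℂ)) : Set (Set ℂ) :=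
  if IsLong u then
    {s | ∃ a ∈ u, s = if (0 : ℂ) ∈ convexHull ℝ a then insert 0 a else a}
  else insert {(0 : ℂ)} u

/-- The part of `v` containing `0`. -/
def asymPart (v : Set (Set ℂ)) : Set ℂ := ⋃₀ {a ∈ v | (0 : ℂ) ∈ a}

/-- The union `ã` of the `μ_e`-orbit of the part of `v` containing `0`
(with `0` removed). -/
def tildePart (e : ℕ) (v : Set (Set ℂ)) : Set ℂ :=
  ⋃ ζ ∈ {z : ℂ | z ^ e = 1}, (fun z => ζ * z) '' (asymPart v \ {0})

/-- The map `♯ : NCP(e,e,n+1) → NCP(e,1,n)`. -/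
def sharpNCP (e : ℕ) (v : Set (Set ℂ)) : Set (Set ℂ) :=
  if SymmPart v then flatNCP v
  else insert (tildePart e v) {b ∈ flatNCP v | ¬ b ⊆ tildePart e v}

/-- The minimal asymmetric partition `m_ζ`, with only non-singleton part `{0, ζ}`. -/
def mzeta (e n : ℕ) (ζ : ℂ) : Set (Set ℂ) :=
  insert {0, ζ} {s | ∃ z ∈ mu (e * n), z ≠ ζ ∧ s = {z}}

/-- The set `a_ζ = {0, ζ_{en}ζ, ζ_{en}²ζ, …, ζ_{en}ⁿζ}`. -/
def azeta (e n : ℕ) (ζ : ℂ) : Set ℂ :=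
  insert 0 {z : ℂ | ∃ k : ℕ, 1 ≤ k ∧ k ≤ n ∧ z = zeta (e * n) ^ k * ζ}

/-- The maximal asymmetric partition `M_ζ`, with asymmetric part `a_ζ` and
remaining parts `ζ' a_ζ ∖ {0}` for `ζ' ∈ μ_e ∖ {1}`. -/
def Mzeta (e n : ℕ) (ζ : ℂ) : Set (Set ℂ) :=
  insert (azeta e n ζ)
    {s | ∃ ζ' : ℂ, ζ' ^ e = 1 ∧ ζ' ≠ 1 ∧ s = (fun z => ζ' * z) '' (azeta e n ζ \ {0})}

/-- `w` is the complement `u\v` of `u` in `v`, in `NCP(e,e,n+1)`, following the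
three cases of the definition: (A) both symmetric, computed through the flats
in `NCP(e,1,n)`; (B) `v` asymmetric, computed in some interval `[disc, M_ζ]`
through restriction to `a_ζ`; (C) `u` asymmetric, computed through the
isomorphisms `ψ_ζ` and `φ_ζ` with the non-crossing partitions of `a_ζ`. -/
def IsComplEE (e n : ℕ) (u v w : Set (Set ℂ)) : Prop :=
  Refines u v ∧
    ((SymmPart u ∧ SymmPart v ∧
        ∃ k, KrewRel (mu (e * n)) (flatNCP u) (flatNCP v) k ∧ w = starNCP k) ∨
     (¬ SymmPart v ∧ ∃ ζ : ℂ, ζ ^ (e * n) = 1 ∧ Refines v (Mzeta e n ζ) ∧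
        Refines w (Mzeta e n ζ) ∧
        KrewRel (azeta e n ζ) (resTo (azeta e n ζ) u) (resTo (azeta e n ζ) v)
          (resTo (azeta e n ζ) w)) ∨
     (¬ SymmPart u ∧ ∃ ζ : ℂ, ζ ^ (e * n) = 1 ∧ Refines (mzeta e n ζ) u ∧
        Refines w (Mzeta e n ζ) ∧
        KrewRel (azeta e n ζ) (resTo (azeta e n ζ) u) (resTo (azeta e n ζ) v)
          (resTo (azeta e n ζ) w)))

/-- Height of an element of `NCP(e,e,n+1)` with `m` parts: `n - (m-1)/e` in the
short symmetric case, `n+1 - (m-1)/e` in the long symmetric case,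
`n+1 - m/e` in the asymmetric case. -/
def htEE (e n : ℕ) (u : Set (Set ℂ)) : ℤ :=
  if ({0} : Set ℂ) ∈ u then (n : ℤ) - ((u.ncard : ℤ) - 1) / (e : ℤ)
  else if IsLong (flatNCP u) then (n : ℤ) + 1 - ((u.ncard : ℤ) - 1) / (e : ℤ)
  else (n : ℤ) + 1 - (u.ncard : ℤ) / (e : ℤ)

/-- The height-one symmetric partition `u_{p,q}`, with non-singleton parts the
`e` rotates `ζ_e^i {ζ_{ne}^p, ζ_{ne}^q}`. -/
def upq (e n : ℕ) (p q : ℤ) : Set (Set ℂ) :=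
  {s | ∃ ζ : ℂ, ζ ^ e = 1 ∧ s = {ζ * zeta (e * n) ^ p, ζ * zeta (e * n) ^ q}} ∪
    {s | ∃ z ∈ insert (0 : ℂ) (mu (e * n)), s = {z} ∧
      ∀ ζ : ℂ, ζ ^ e = 1 → z ≠ ζ * zeta (e * n) ^ p ∧ z ≠ ζ * zeta (e * n) ^ q}

/-- The height-one asymmetric partition `u_p`, with unique non-singleton part
`{0, ζ_{en}^p}`. -/
def upt (e n : ℕ) (p : ℤ) : Set (Set ℂ) :=
  insert {0, zeta (e * n) ^ p}
    {s | ∃ z ∈ mu (e * n), z ≠ zeta (e * n) ^ p ∧ s = {z}}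

/-- A weakly increasing chain of length `N` in a set `S` of partitions. -/
def IsChainOf (S : Set (Set (Set ℂ))) (N : ℕ) (c : Fin N → Set (Set ℂ)) : Prop :=
  (∀ i, c i ∈ S) ∧ ∀ i j : Fin N, i ≤ j → Refines (c i) (c j)

/-! ### Orientation of points on the circle -/

/-- Twice the signed area of the triangle `a b c`: positive exactly when `a`, `b`, `c` are in
counterclockwise order. The inequality in `ccwSucc b z z'` is `0 < ncDet z z' w`. -/
def ncDet (a b c : ℂ) : ℝ := (b - a).re * (c - a).im - (b - a).im * (c - a).re

/-- The point `exp(2iπt/N)` of the unit circle. Integral `t` give the elements of `μ_N`;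
half-integral `t` lie strictly between two consecutive ones. -/
def ncPt (N : ℕ) (t : ℝ) : ℂ := Complex.exp (((2 * Real.pi * t / N : ℝ) : ℂ) * Complex.I)

lemma ncDet_rot (a b c : ℂ) : ncDet b c a = ncDet a b c := by
  simp only [ncDet, Complex.sub_re, Complex.sub_im]; ring

lemma ncDet_swap (a b c : ℂ) : ncDet a c b = - ncDet a b c := by
  simp only [ncDet]; ring

lemma ncDet_mul (ω a b c : ℂ) :
    ncDet (ω * a) (ω * b) (ω * c) = Complex.normSq ω * ncDet a b c := by
  simp only [ncDet, Complex.sub_re, Complex.sub_im, Complex.mul_re, Complex.mul_im,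
    Complex.normSq_apply]; ring

/-- Points of the circle met in counterclockwise order within one turn have positive
orientation: the determinant is `4 sin(π(b-a)/N) sin(π(c-a)/N) sin(π(c-b)/N)`. -/
lemma ncDet_pos {N : ℕ} (hN : 0 < N) {a b c : ℝ} (hab : a < b) (hbc : b < c)
    (hca : c < a + N) : 0 < ncDet (ncPt N a) (ncPt N b) (ncPt N c) := by
  have hN' : (0 : ℝ) < N := by exact_mod_cast hN
  have key : ncDet (ncPt N a) (ncPt N b) (ncPt N c) =
      4 * (Real.sin (Real.pi * ((b - a) / N)) * Real.sin (Real.pi * ((c - a) / N)) *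
        Real.sin (Real.pi * ((c - b) / N))) := by
    simp only [ncDet, ncPt, Complex.sub_re, Complex.sub_im, Complex.exp_ofReal_mul_I_re,
      Complex.exp_ofReal_mul_I_im]
    rw [Real.cos_sub_cos, Real.sin_sub_sin, Real.sin_sub_sin, Real.cos_sub_cos]
    have h1 : (2 * Real.pi * b / N - 2 * Real.pi * a / N) / 2 = Real.pi * ((b - a) / N) := by ring
    have h2 : (2 * Real.pi * c / N - 2 * Real.pi * a / N) / 2 = Real.pi * ((c - a) / N) := by ring
    have h3 : Real.pi * ((c - b) / N) = (2 * Real.pi * c / N + 2 * Real.pi * a / N) / 2 -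
      (2 * Real.pi * b / N + 2 * Real.pi * a / N) / 2 := by ring
    rw [h1, h2, h3, Real.sin_sub]; ring
  have pos : ∀ d : ℝ, 0 < d → d < N → 0 < Real.sin (Real.pi * (d / N)) := fun d h0 h1 =>
    Real.sin_pos_of_pos_of_lt_pi (by positivity)
      (by have : d / N < 1 := (div_lt_one hN').2 h1
          nlinarith [Real.pi_pos])
  rw [key]
  have := pos (b - a) (by linarith) (by linarith)
  have := pos (c - a) (by linarith) (by linarith)
  have := pos (c - b) (by linarith) (by linarith)
  positivity

lemma ncPt_add (N : ℕ) (s t : ℝ) : ncPt N (s + t) = ncPt N s * ncPt N t := by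
  rw [ncPt, ncPt, ncPt, ← Complex.exp_add]; congr 1; push_cast; ring

lemma ncPt_nat (N k : ℕ) : ncPt N k = zeta N ^ k := by
  rw [ncPt, zeta, ← Complex.exp_nat_mul]; congr 1; push_cast; ring

lemma zeta_prim {N : ℕ} (hN : 0 < N) : IsPrimitiveRoot (zeta N) N :=
  Complex.isPrimitiveRoot_exp N hN.ne'

lemma ncPt_self {N : ℕ} (hN : 0 < N) : ncPt N (N : ℕ) = 1 := by
  rw [ncPt_nat, (zeta_prim hN).pow_eq_one]

lemma ncPt_mem (N k : ℕ) (hN : 0 < N) : ncPt N k ∈ mu N := by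
  rw [mu, mem_ofPred_eq, ncPt_nat, ← pow_mul, mul_comm, pow_mul, (zeta_prim hN).pow_eq_one, one_pow]

lemma exists_ncPt {N : ℕ} (hN : 0 < N) {z : ℂ} (hz : z ∈ mu N) : ∃ k < N, z = ncPt N k := by
  have : NeZero N := ⟨hN.ne'⟩
  obtain ⟨i, hi, h⟩ := (zeta_prim hN).eq_pow_of_pow_eq_one hz
  exact ⟨i, hi, by rw [ncPt_nat, h]⟩

lemma ncPt_inj {N : ℕ} (hN : 0 < N) {i j : ℕ} (hi : i < N) (hj : j < N)
    (h : ncPt N i = ncPt N j) : i = j := by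
  rw [ncPt_nat, ncPt_nat] at h
  exact (zeta_prim hN).pow_inj hi hj h

lemma mu_finite {N : ℕ} (hN : 0 < N) : (mu N).Finite := by
  refine ((Finset.range N).finite_toSet.image (fun k : ℕ => ncPt N k)).subset ?_
  intro z hz
  obtain ⟨k, hk, rfl⟩ := exists_ncPt hN hz
  exact ⟨k, by simpa using hk, rfl⟩

lemma ncDet_nat {N : ℕ} (hN : 0 < N) {i j k : ℕ} (hij : i < j) (hjk : j < k) (hk : k < N) :
    0 < ncDet (ncPt N i) (ncPt N j) (ncPt N k) := by
  apply ncDet_pos hN (by exact_mod_cast hij) (by exact_mod_cast hjk)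
  have : k < i + N := by omega
  exact_mod_cast this

lemma part_eq {x : Set ℂ} {u : Set (Set ℂ)} (hu : IsPartitionOf x u) {a b : Set ℂ} (ha : a ∈ u)
    (hb : b ∈ u) {z : ℂ} (hza : z ∈ a) (hzb : z ∈ b) : a = b :=
  (hu.2 z ((hu.1 a ha).2 hza)).unique ⟨ha, hza⟩ ⟨hb, hzb⟩

/-! ### Chords of a non-crossing partition -/

/-- The `i`-th and the `j`-th point of `μ_N` lie in a common part of `u`, that is, they are equal
or span a chord of `u`. -/
def SamePart (N : ℕ) (u : Set (Set ℂ)) (i j : ℕ) : Prop :=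
  ∃ a ∈ u, ncPt N i ∈ a ∧ ncPt N j ∈ a

/-- The diagonals `a c` and `b d` of a convex quadrilateral `a b c d` meet; the point of
intersection is written with barycentric weights given by the areas of the triangles. -/
lemma hull_meet {a b c d : ℂ} (h1 : 0 < ncDet a b c) (h2 : 0 < ncDet a c d)
    (h3 : 0 < ncDet a b d) (h4 : 0 < ncDet b c d) {s t : Set ℂ} (ha : a ∈ s) (hc : c ∈ s)
    (hb : b ∈ t) (hd : d ∈ t) : (convexHull ℝ s ∩ convexHull ℝ t).Nonempty := by
  set S := ncDet b c d + ncDet a b d with hS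
  have hSpos : 0 < S := by positivity
  have hS' : S = ncDet a c d + ncDet a b c := by
    simp only [hS, ncDet, Complex.sub_re, Complex.sub_im]; ring
  refine ⟨(ncDet b c d / S) • a + (ncDet a b d / S) • c, ?_, ?_⟩
  · apply (convex_convexHull ℝ s) (subset_convexHull ℝ s ha) (subset_convexHull ℝ s hc)
      (by positivity) (by positivity)
    rw [← add_div, ← hS, div_self hSpos.ne']
  · have e : (ncDet b c d / S) • a + (ncDet a b d / S) • c =
        (ncDet a c d / S) • b + (ncDet a b c / S) • d := by
      apply Complex.ext <;>
      · simp only [Complex.add_re, Complex.add_im, Complex.real_smul, Complex.re_ofReal_mul,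
          Complex.im_ofReal_mul]
        field_simp
        simp only [ncDet, Complex.sub_re, Complex.sub_im]; ring
    rw [e]
    apply (convex_convexHull ℝ t) (subset_convexHull ℝ t hb) (subset_convexHull ℝ t hd)
      (by positivity) (by positivity)
    rw [← add_div, ← hS', div_self hSpos.ne']

/-- Two crossing chords of a non-crossing partition belong to the same part. -/
lemma samePart_of_crossing {N : ℕ} (hN : 0 < N) {u : Set (Set ℂ)} (hnc : IsNoncrossing u)
    {i j k l : ℕ} (hij : i < j) (hjk : j < k) (hkl : k < l) (hl : l < N)
    (h1 : SamePart N u i k) (h2 : SamePart N u j l) : SamePart N u i j := by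
  obtain ⟨a, ha, hia, hka⟩ := h1
  obtain ⟨b, hb, hjb, hlb⟩ := h2
  have := hnc a ha b hb (hull_meet (ncDet_nat hN hij hjk (by omega))
    (ncDet_nat hN (hij.trans hjk) hkl hl) (ncDet_nat hN hij (by omega) hl)
    (ncDet_nat hN hjk hkl hl) hia hka hjb hlb)
  exact ⟨a, ha, hia, this ▸ hjb⟩

lemma SamePart.symm {N : ℕ} {u : Set (Set ℂ)} {i j : ℕ} (h : SamePart N u i j) :
    SamePart N u j i := by
  obtain ⟨a, ha, hi, hj⟩ := h
  exact ⟨a, ha, hj, hi⟩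

lemma SamePart.trans {x : Set ℂ} {N : ℕ} {u : Set (Set ℂ)} (hu : IsPartitionOf x u) {i j k : ℕ}
    (h : SamePart N u i j) (h' : SamePart N u j k) : SamePart N u i k := by
  obtain ⟨a, ha, hi, hj⟩ := h
  obtain ⟨b, hb, hj', hk⟩ := h'
  obtain rfl := part_eq hu ha hb hj hj'
  exact ⟨a, ha, hi, hk⟩

/-! ### The Kreweras complement -/

/-- No chord `p q` of `u` separates the arcs `(i-1, i)` and `(j-1, j)` of the circle.
With the indices in `{0, …, N-1}`, the arc `(i-1, i)` lies between the ends of the chord `p q`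
exactly when just one of `i ≤ p` and `i ≤ q` holds. -/
def SameGap (N : ℕ) (u : Set (Set ℂ)) (i j : ℕ) : Prop :=
  ∀ p < N, ∀ q < N, SamePart N u p q → ((i ≤ p ↔ i ≤ q) ↔ (j ≤ p ↔ j ≤ q))

lemma SameGap.refl (N : ℕ) (u : Set (Set ℂ)) (i : ℕ) : SameGap N u i i :=
  fun _ _ _ _ _ => Iff.rfl

lemma SameGap.symm {N : ℕ} {u : Set (Set ℂ)} {i j : ℕ} (h : SameGap N u i j) : SameGap N u j i :=
  fun p hp q hq hpq => (h p hp q hq hpq).symm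

lemma SameGap.trans {N : ℕ} {u : Set (Set ℂ)} {i j k : ℕ} (h : SameGap N u i j)
    (h' : SameGap N u j k) : SameGap N u i k :=
  fun p hp q hq hpq => (h p hp q hq hpq).trans (h' p hp q hq hpq)

/-- The Kreweras complement of `u`, in geometric form: the arc `(i-1, i)` is labelled by the
`i`-th point of `μ_N`, and two points are put together when no chord of `u` separates their
arcs. -/
def krew (N : ℕ) (u : Set (Set ℂ)) : Set (Set ℂ) :=
  {s | ∃ i < N, s = {z | ∃ j < N, z = ncPt N j ∧ SameGap N u i j}}

lemma sameGap_of_mem_krew {N : ℕ} (hN : 0 < N) {u : Set (Set ℂ)} {i j : ℕ} (hi : i < N)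
    (hj : j < N) (h : SamePart N (krew N u) i j) : SameGap N u i j := by
  obtain ⟨_, ⟨k, hk, rfl⟩, ⟨i', hi', h1, h2⟩, ⟨j', hj', h3, h4⟩⟩ := h
  obtain rfl := ncPt_inj hN hi hi' h1
  obtain rfl := ncPt_inj hN hj hj' h3
  exact h2.symm.trans h4

lemma samePart_krew {N : ℕ} {u : Set (Set ℂ)} {i j : ℕ} (hi : i < N)
    (hj : j < N) (h : SameGap N u i j) : SamePart N (krew N u) i j :=
  ⟨_, ⟨i, hi, rfl⟩, ⟨i, hi, rfl, SameGap.refl _ _ _⟩, ⟨j, hj, rfl, h⟩⟩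

lemma krew_partition {N : ℕ} (hN : 0 < N) (u : Set (Set ℂ)) : IsPartitionOf (mu N) (krew N u) := by
  constructor
  · rintro _ ⟨i, hi, rfl⟩
    refine ⟨⟨ncPt N i, i, hi, rfl, SameGap.refl _ _ _⟩, ?_⟩
    rintro _ ⟨j, hj, rfl, -⟩
    exact ncPt_mem N j hN
  · intro z hz
    obtain ⟨k, hk, rfl⟩ := exists_ncPt hN hz
    refine ⟨_, ⟨⟨k, hk, rfl⟩, ⟨k, hk, rfl, SameGap.refl _ _ _⟩⟩, ?_⟩
    rintro _ ⟨⟨i, hi, rfl⟩, ⟨k', hk', h1, h2⟩⟩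
    obtain rfl := ncPt_inj hN hk hk' h1
    ext z
    constructor
    · rintro ⟨j, hj, rfl, h⟩; exact ⟨j, hj, rfl, h2.symm.trans h⟩
    · rintro ⟨j, hj, rfl, h⟩; exact ⟨j, hj, rfl, h2.trans h⟩

lemma convex_ncDet (P Q : ℂ) : Convex ℝ {z | 0 < ncDet P Q z} := by
  intro x hx y hy a b ha hb hab
  have e : ncDet P Q (a • x + b • y) = a * ncDet P Q x + b * ncDet P Q y := by
    have : a = 1 - b := by linarith
    subst this
    simp only [ncDet, Complex.sub_re, Complex.sub_im, Complex.add_re, Complex.add_im,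
      Complex.real_smul, Complex.re_ofReal_mul, Complex.im_ofReal_mul]
    ring
  simp only [mem_ofPred_eq] at *
  rw [e]
  rcases ha.eq_or_lt with rfl | ha
  · have : b = 1 := by linarith
    subst this; linarith
  · have := mul_pos ha hx
    have := mul_nonneg hb hy.le
    linarith

/-- A chord strictly separates the points on its two sides. Each point `i` stands for the arc
`(i-1, i)`, so the chord `p q` itself is replaced by the line through the positions `p + 1/2` and
`q + 1/2`, which avoids `μ_N`. -/
lemma separate {N : ℕ} (hN : 0 < N) {p q : ℕ} (hpq : p < q) (hq : q < N) {s t : Set ℂ}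
    (hs : ∀ z ∈ s, ∃ i < N, z = ncPt N i ∧ (i ≤ p ↔ i ≤ q))
    (ht : ∀ z ∈ t, ∃ i < N, z = ncPt N i ∧ ¬ (i ≤ p ↔ i ≤ q)) :
    ¬ (convexHull ℝ s ∩ convexHull ℝ t).Nonempty := by
  rintro ⟨x, hx, hy⟩
  -- The cutting line joins the points at positions `p + 1/2` and `q + 1/2`.
  set P := ncPt N ((p : ℝ) + 1 / 2)
  set Q := ncPt N ((q : ℝ) + 1 / 2)
  have hpq' : (p : ℝ) + 1 ≤ q := by exact_mod_cast hpq
  have hq' : (q : ℝ) + 1 ≤ N := by exact_mod_cast hq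
  have hp0 : (0 : ℝ) ≤ p := Nat.cast_nonneg p
  have h1 : x ∈ {z | 0 < ncDet P Q z} := by
    refine convexHull_min ?_ (convex_ncDet P Q) hx
    intro z hz
    obtain ⟨i, hi, rfl, h⟩ := hs z hz
    have hi' : (i : ℝ) + 1 ≤ N := by exact_mod_cast hi
    have hi0 : (0 : ℝ) ≤ i := Nat.cast_nonneg i
    by_cases hip : i ≤ p
    · have : (i : ℝ) ≤ p := by exact_mod_cast hip
      rw [mem_ofPred_eq, ncDet_rot]
      exact ncDet_pos hN (by linarith) (by linarith) (by linarith)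
    · have : q < i := by omega
      have : (q : ℝ) + 1 ≤ i := by exact_mod_cast this
      exact ncDet_pos hN (by linarith) (by linarith) (by linarith)
  have h2 : x ∈ {z | 0 < ncDet Q P z} := by
    refine convexHull_min ?_ (convex_ncDet Q P) hy
    intro z hz
    obtain ⟨i, hi, rfl, h⟩ := ht z hz
    have h3 : p < i ∧ i ≤ q := by omega
    have h4 : (p : ℝ) + 1 ≤ i := by exact_mod_cast h3.1
    have h5 : (i : ℝ) ≤ q := by exact_mod_cast h3.2
    rw [mem_ofPred_eq, ← ncDet_rot]
    exact ncDet_pos hN (by linarith) (by linarith) (by linarith)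
  simp only [mem_ofPred_eq] at h1 h2
  have : ncDet Q P x = - ncDet P Q x := by
    simp only [ncDet, Complex.sub_re, Complex.sub_im]; ring
  linarith

/-- The complement is non-crossing, whether or not `u` is: a chord of `u` separating two classes
provides a line separating their convex hulls. -/
lemma krew_noncrossing {N : ℕ} (hN : 0 < N) (u : Set (Set ℂ)) : IsNoncrossing (krew N u) := by
  intro a ha b hb hab
  by_contra hne
  have hp := krew_partition hN u
  obtain ⟨i, hi, rfl⟩ := id ha
  obtain ⟨j, hj, rfl⟩ := id hb
  have hij : ¬ SameGap N u i j := fun h => hne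
    (part_eq hp ha hb ⟨j, hj, rfl, h⟩ ⟨j, hj, rfl, SameGap.refl _ _ _⟩)
  unfold SameGap at hij
  push Not at hij
  obtain ⟨p, hpN, q, hqN, hpq, h⟩ := hij
  -- A chord of `u` between the gaps `i` and `j` has the two whole classes on its two sides.
  have main : ∀ p q, p < N → q < N → p < q → SamePart N u p q →
      ¬ ((i ≤ p ↔ i ≤ q) ↔ (j ≤ p ↔ j ≤ q)) → False := by
    intro p q hpN hqN hlt hpq h
    by_cases hi' : (i ≤ p ↔ i ≤ q)
    · refine separate hN hlt hqN ?_ ?_ hab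
      · rintro _ ⟨k, hk, rfl, hik⟩
        exact ⟨k, hk, rfl, (hik p hpN q hqN hpq).1 hi'⟩
      · rintro _ ⟨k, hk, rfl, hjk⟩
        have := hjk p hpN q hqN hpq
        exact ⟨k, hk, rfl, by omega⟩
    · rw [inter_comm] at hab
      refine separate hN hlt hqN ?_ ?_ hab
      · rintro _ ⟨k, hk, rfl, hjk⟩
        have := hjk p hpN q hqN hpq
        exact ⟨k, hk, rfl, by omega⟩
      · rintro _ ⟨k, hk, rfl, hik⟩
        have := hik p hpN q hqN hpq
        exact ⟨k, hk, rfl, by omega⟩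
  have h : ¬ ((i ≤ p ↔ i ≤ q) ↔ (j ≤ p ↔ j ≤ q)) := by omega
  rcases lt_trichotomy p q with hlt | rfl | hlt
  · exact main p q hpN hqN hlt hpq h
  · simp at h
  · exact main q p hqN hpN hlt hpq.symm (by omega)

/-! ### Successor maps and the recovery of a partition from its complement -/

lemma succ_det {u : Set (Set ℂ)} {σ : ℂ → ℂ}
    (hσ : IsSuccMapOn u σ) {a : Set ℂ} (ha : a ∈ u) {z w : ℂ} (hz : z ∈ a) (hw : w ∈ a)
    (hwz : w ≠ z) : z ≠ σ z ∧ (w ≠ σ z → 0 < ncDet z (σ z) w) := by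
  have hne : a ≠ {z} := by rintro rfl; exact hwz hw
  obtain ⟨-, -, h1, h2⟩ := (hσ a ha z hz).2 hne
  exact ⟨h1, h2 w hw hwz⟩

lemma succ_mem {u : Set (Set ℂ)} {σ : ℂ → ℂ} (hσ : IsSuccMapOn u σ) {a : Set ℂ} (ha : a ∈ u)
    {z : ℂ} (hz : z ∈ a) : σ z ∈ a := by
  by_cases h : a = {z}
  · rw [(hσ a ha z hz).1 h]; exact hz
  · exact ((hσ a ha z hz).2 h).2.1

/-- If `σ` sends `i` to `j`, no other point `p` of the part lies on the open counterclockwise arc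
from `i` to `j`; the arc contains `p` when `i < p < j`, `j < i < p` or `p < j < i`. -/
lemma succ_not_between {N : ℕ} (hN : 0 < N) {u : Set (Set ℂ)} {σ : ℂ → ℂ}
    (hσ : IsSuccMapOn u σ) {a : Set ℂ} (ha : a ∈ u) {i j p : ℕ} (hi : i < N) (hj : j < N)
    (hp : p < N) (hia : ncPt N i ∈ a) (hij : σ (ncPt N i) = ncPt N j) (hpa : ncPt N p ∈ a)
    (hpi : p ≠ i) (hpj : p ≠ j) :
    i ≠ j ∧ ¬ (i < p ∧ p < j) ∧ ¬ (j < i ∧ i < p) ∧ ¬ (p < j ∧ j < i) := by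
  obtain ⟨h1, h2⟩ := succ_det hσ ha hia hpa (fun h => hpi (ncPt_inj hN hp hi h))
  rw [hij] at h1 h2
  have h2 := h2 (fun h => hpj (ncPt_inj hN hp hj h))
  refine ⟨fun h => h1 (by rw [h]), ?_, ?_, ?_⟩
  · rintro ⟨h3, h4⟩
    have := ncDet_nat hN h3 h4 hj
    rw [ncDet_swap] at this; linarith
  · rintro ⟨h3, h4⟩
    have := ncDet_nat hN h3 h4 hp
    have e := ncDet_rot (ncPt N j) (ncPt N i) (ncPt N p)
    have e2 := ncDet_swap (ncPt N i) (ncPt N p) (ncPt N j)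
    linarith
  · rintro ⟨h3, h4⟩
    have := ncDet_nat hN h3 h4 hi
    have e := ncDet_rot (ncPt N p) (ncPt N j) (ncPt N i)
    have e1 := ncDet_rot (ncPt N j) (ncPt N i) (ncPt N p)
    have e2 := ncDet_swap (ncPt N i) (ncPt N p) (ncPt N j)
    linarith

/-- A transitive relation which relates every point of a part to its successor relates `i` to `j`
for all `i < j` in that part: the successors of `i` run through the part in increasing order until
they reach `j`. -/
lemma rel_of_mem_part {N : ℕ} (hN : 0 < N) {u : Set (Set ℂ)} (hu : IsPartitionOf (mu N) u)
    {σ : ℂ → ℂ} (hσ : IsSuccMapOn u σ) {R : ℕ → ℕ → Prop}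
    (trans : ∀ i j k, R i j → R j k → R i k) {a : Set ℂ} (ha : a ∈ u)
    (step : ∀ i < N, ∀ j < N, ncPt N i ∈ a → σ (ncPt N i) = ncPt N j → R i j) :
    ∀ d i j : ℕ, j - i = d → i < j → j < N → ncPt N i ∈ a → ncPt N j ∈ a → R i j := by
  intro d
  induction d using Nat.strong_induction_on with
  | _ d ih =>
    intro i j hd hij hj hia hja
    obtain ⟨k, hk, hik⟩ := exists_ncPt hN ((hu.1 a ha).2 (succ_mem hσ ha hia))
    have hR := step i (by omega) k hk hia hik
    by_cases hkj : j = k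
    · rwa [hkj]
    · have := succ_not_between hN hσ ha (by omega) hk hj hia hik hja (by omega) hkj
      have hka : ncPt N k ∈ a := hik ▸ succ_mem hσ ha hia
      exact trans _ _ _ hR (ih (j - k) (by omega) k j rfl (by omega) hj hka hja)

/-- The points `σ_u(i)` and `i + 1` lie in the same part of the Kreweras complement: a chord of
`u` separating the arcs just before them would leave the open arc from `i` to `σ_u(i)`, hence
either cross the chord from `i` to `σ_u(i)` or give a point of the part of `i` on that arc. -/
lemma sameGap_succ {N : ℕ} (hN : 0 < N) {u : Set (Set ℂ)} (hu : IsPartitionOf (mu N) u)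
    (hnc : IsNoncrossing u) {σ : ℂ → ℂ} (hσ : IsSuccMapOn u σ) {i j : ℕ} (hi : i < N)
    (hj : j < N) (hij : σ (ncPt N i) = ncPt N j) :
    SameGap N u j (if i + 1 < N then i + 1 else 0) := by
  obtain ⟨a, ⟨ha, hia⟩, -⟩ := hu.2 _ (ncPt_mem N i hN)
  have hja : ncPt N j ∈ a := hij ▸ succ_mem hσ ha hia
  have hEij : SamePart N u i j := ⟨a, ha, hia, hja⟩
  -- No chord of `u` leaves the open arc from `i` to `j`.
  have key : ∀ p q, p < N → q < N → SamePart N u p q →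
      ¬ ((i < j ∧ i < p ∧ p < j) ∨ (j < i ∧ (i < p ∨ p < j)) ∨ (i = j ∧ p ≠ i)) ∨
      ((i < j ∧ i < q ∧ q < j) ∨ (j < i ∧ (i < q ∨ q < j)) ∨ (i = j ∧ q ≠ i)) := by
    intro p q hp hq hpq
    by_contra hcon
    obtain ⟨h1, h2⟩ := not_or.1 hcon
    rw [not_not] at h1
    have hpi : ¬ SamePart N u i p := by
      rintro ⟨b, hb, hib, hpb⟩
      obtain rfl := part_eq hu ha hb hia hib
      have := succ_not_between hN hσ ha hi hj hp hia hij hpb (by omega) (by omega)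
      omega
    have hqi : q ≠ i := by rintro rfl; exact hpi hpq.symm
    have hqj : q ≠ j := by rintro rfl; exact hpi (hEij.trans hu hpq.symm)
    have hqi' : ¬ SamePart N u q i := fun h => hpi (hpq.trans hu h).symm
    by_cases hlt : i < j
    · by_cases hq' : q < i
      · exact hqi' (samePart_of_crossing hN hnc hq' (by omega) (by omega) hj hpq.symm hEij)
      · exact hpi (samePart_of_crossing hN hnc (by omega) (by omega) (by omega) hq hEij hpq)
    · by_cases hp' : p < j
      · exact hpi (hEij.trans hu (samePart_of_crossing hN hnc hp' (by omega)
          (by omega) hi hpq hEij.symm).symm)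
      · exact hqi' (((samePart_of_crossing hN hnc (by omega) (by omega) (by omega) hp hEij.symm
          hpq.symm).symm).trans hu hEij.symm)
  intro p hp q hq hpq
  have k1 := key p q hp hq hpq
  have k2 := key q p hq hp hpq.symm
  clear key hpq hEij
  split_ifs <;> omega

/-- The partition `u` is recovered from its complement: if `p < q` is a chord which separates no
two arcs of the same class, then `p` and `q` are in the same part. The successor `y` of `p` has
`y` and `p + 1` in one class by `sameGap_succ`, which forces `p < y ≤ q`; the argument is then
repeated with the chord `y q`. -/
lemma samePart_of_gaps {N : ℕ} (hN : 0 < N) {u : Set (Set ℂ)} (hu : IsPartitionOf (mu N) u)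
    (hnc : IsNoncrossing u) {σ : ℂ → ℂ} (hσ : IsSuccMapOn u σ) :
    ∀ d p q : ℕ, q - p = d → p < q → q < N →
      (∀ i < N, ∀ j < N, SameGap N u i j → ((i ≤ p ↔ i ≤ q) ↔ (j ≤ p ↔ j ≤ q))) →
      SamePart N u p q := by
  intro d
  induction d using Nat.strong_induction_on with
  | _ d ih =>
    intro p q hd hpq hq H
    obtain ⟨a, ⟨ha, hpa⟩, -⟩ := hu.2 _ (ncPt_mem N p hN)
    obtain ⟨y, hy, hpy⟩ := exists_ncPt hN ((hu.1 a ha).2 (succ_mem hσ ha hpa))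
    have hya : ncPt N y ∈ a := hpy ▸ succ_mem hσ ha hpa
    have hEpy : SamePart N u p y := ⟨a, ha, hpa, hya⟩
    have h1 := sameGap_succ hN hu hnc hσ (by omega) hy hpy
    rw [if_pos (by omega)] at h1
    have h2 := H y hy (p + 1) (by omega) h1
    by_cases hyq : y = q
    · rwa [← hyq]
    · refine hEpy.trans hu (ih (q - y) (by omega) y q rfl (by omega) hq ?_)
      intro i hi j hj hij
      have h3 := H i hi j hj hij
      have h4 := hij p (by omega) y hy hEpy
      clear H ih hij
      omega

/-- A partition with the same complement as the non-crossing partition `v` has each of its chords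
among those of `v`. -/
lemma krew_injOn {N : ℕ} (hN : 0 < N) {u v : Set (Set ℂ)}
    (hv : IsPartitionOf (mu N) v) (hnc : IsNoncrossing v) {σ : ℂ → ℂ}
    (hσ : IsSuccMapOn v σ) (h : krew N u = krew N v) {p q : ℕ} (hp : p < N)
    (hq : q < N) (hpq : SamePart N u p q) : SamePart N v p q := by
  have H : ∀ p q, p < q → q < N → SamePart N u p q → SamePart N v p q := by
    intro p q hpq hq hE
    refine samePart_of_gaps hN hv hnc hσ (q - p) p q rfl hpq hq ?_
    intro i hi j hj hij
    refine sameGap_of_mem_krew hN hi hj (h ▸ samePart_krew hi hj hij) p (by omega) q hq hE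
  rcases lt_trichotomy p q with hlt | rfl | hlt
  · exact H p q hlt hq hpq
  · obtain ⟨a, ⟨ha, hpa⟩, -⟩ := hv.2 _ (ncPt_mem N p hN)
    exact ⟨a, ha, hpa, hpa⟩
  · exact (H q p hlt hp hpq.symm).symm

lemma part_subset_of_samePart {N : ℕ} (hN : 0 < N) {u v : Set (Set ℂ)}
    (hu : IsPartitionOf (mu N) u) (hv : IsPartitionOf (mu N) v)
    (h : ∀ p < N, ∀ q < N, SamePart N u p q ↔ SamePart N v p q) : u ⊆ v := by
  intro a ha
  obtain ⟨⟨z, hz⟩, hsub⟩ := hu.1 a ha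
  obtain ⟨b, ⟨hb, hzb⟩, -⟩ := hv.2 z (hsub hz)
  have : a = b := by
    obtain ⟨p, hp, rfl⟩ := exists_ncPt hN (hsub hz)
    ext w
    constructor
    · intro hw
      obtain ⟨q, hq, rfl⟩ := exists_ncPt hN (hsub hw)
      obtain ⟨c, hc, hpc, hqc⟩ := (h p hp q hq).1 ⟨a, ha, hz, hw⟩
      rwa [part_eq hv hb hc hzb hpc]
    · intro hw
      obtain ⟨q, hq, rfl⟩ := exists_ncPt hN ((hv.1 b hb).2 hw)
      obtain ⟨c, hc, hpc, hqc⟩ := (h p hp q hq).2 ⟨b, hb, hzb, hw⟩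
      rwa [part_eq hu ha hc hz hpc]
  exact this ▸ hb

/-! ### Existence, injectivity and equivariance of successor maps -/

/-- Every partition of `μ_N` has a successor map: the successor of `z` is `ζ_N^d z` for the least
`d > 0` such that this point is in the part of `z`. -/
lemma exists_succMap {N : ℕ} (hN : 0 < N) {u : Set (Set ℂ)} (hu : IsPartitionOf (mu N) u) :
    ∃ σ : ℂ → ℂ, IsSuccMapOn u σ := by
  have ex : ∀ a ∈ u, ∀ z ∈ a, a ≠ {z} → ∃ s, ccwSucc a z s := by
    intro a ha z hz hne
    have hsub := (hu.1 a ha).2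
    have rep : ∀ w ∈ a, w ≠ z → ∃ d : ℕ, 0 < d ∧ d < N ∧ w = ncPt N d * z := by
      intro w hw hwz
      have hz0 : z ≠ 0 := by
        rintro rfl
        have : (0 : ℂ) ^ N = 1 := hsub hz
        rw [zero_pow hN.ne'] at this
        exact zero_ne_one this
      have : w / z ∈ mu N := by
        have h1 : w ^ N = 1 := hsub hw
        have h2 : z ^ N = 1 := hsub hz
        rw [mu, mem_ofPred_eq, div_pow, h1, h2, div_one]
      obtain ⟨d, hd, h⟩ := exists_ncPt hN this
      refine ⟨d, Nat.pos_of_ne_zero ?_, hd, by rw [← h, div_mul_cancel₀ _ hz0]⟩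
      rintro rfl
      rw [ncPt_nat, pow_zero, div_eq_one_iff_eq hz0] at h
      exact hwz h
    have hex : ∃ d : ℕ, 0 < d ∧ d < N ∧ ncPt N d * z ∈ a := by
      by_contra hcon
      push Not at hcon
      refine hne (Subset.antisymm (fun w hw => ?_) (singleton_subset_iff.2 hz))
      by_contra hwz
      obtain ⟨d, h0, h1, rfl⟩ := rep w hw hwz
      exact hcon d h0 h1 hw
    obtain ⟨h0, h1, h2⟩ := Nat.find_spec hex
    set d := Nat.find hex with hd
    obtain ⟨i, hi, rfl⟩ := exists_ncPt hN (hsub hz)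
    refine ⟨ncPt N d * ncPt N i, hz, h2, ?_, ?_⟩
    · intro h
      have h3 : ncPt N d = ncPt N (0 : ℕ) := by
        have : ncPt N i ≠ 0 := Complex.exp_ne_zero _
        have h4 : ncPt N d = 1 := mul_right_cancel₀ this (by rw [← h, one_mul])
        rw [h4, ncPt_nat, pow_zero]
      exact h0.ne' (ncPt_inj hN h1 hN h3)
    · intro w hw hwz hws
      obtain ⟨d', h0', h1', rfl⟩ := rep w hw hwz
      have hle : d ≤ d' := Nat.find_min' hex ⟨h0', h1', hw⟩
      have hlt : d < d' := lt_of_le_of_ne hle (fun h => hws (by rw [h]))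
      change 0 < ncDet _ _ _
      rw [← ncPt_add, ← ncPt_add]
      have a1 : (0 : ℝ) < d := by exact_mod_cast h0
      have a2 : (d : ℝ) < d' := by exact_mod_cast hlt
      have a3 : (d' : ℝ) < N := by exact_mod_cast h1'
      exact ncDet_pos hN (by linarith) (by linarith) (by linarith)
  refine ⟨fun z => if h : ∃ s, ∃ a ∈ u, z ∈ a ∧ a ≠ {z} ∧ ccwSucc a z s then h.choose else z, ?_⟩
  intro b hb z hz
  constructor
  · intro hbz
    refine dif_neg ?_
    rintro ⟨s, a, ha, hza, hne, -⟩
    exact hne (part_eq hu ha hb hza hz ▸ hbz)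
  · intro hne
    obtain ⟨s, hs⟩ := ex b hb z hz hne
    have h : ∃ s, ∃ a ∈ u, z ∈ a ∧ a ≠ {z} ∧ ccwSucc a z s := ⟨s, b, hb, hz, hne, hs⟩
    simp only [dif_pos h]
    obtain ⟨a, ha, hza, -, h'⟩ := h.choose_spec
    rwa [part_eq hu hb ha hz hza]

/-- If `z ≠ w` had the same successor `s`, the triples `z, s, w` and `w, s, z` would both be
counterclockwise. -/
lemma succ_injOn {N : ℕ} {u : Set (Set ℂ)} (hu : IsPartitionOf (mu N) u)
    {σ : ℂ → ℂ} (hσ : IsSuccMapOn u σ) : InjOn σ (mu N) := by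
  intro z hz w hw h
  by_contra hne
  obtain ⟨a, ⟨ha, hza⟩, -⟩ := hu.2 z hz
  obtain ⟨b, ⟨hb, hwb⟩, -⟩ := hu.2 w hw
  obtain rfl := part_eq hu ha hb (succ_mem hσ ha hza) (h ▸ succ_mem hσ hb hwb)
  obtain ⟨h1, h2⟩ := succ_det hσ ha hza hwb (Ne.symm hne)
  obtain ⟨h3, h4⟩ := succ_det hσ ha hwb hza hne
  have h5 := h2 (fun e => h3 (by rw [← h, ← e]))
  have h6 := h4 (fun e => h1 (by rw [h, ← e]))
  rw [← h, ← ncDet_rot, ← ncDet_rot, ncDet_swap] at h6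
  have e1 := ncDet_rot z (σ z) w
  have e2 := ncDet_rot w z (σ z)
  linarith

lemma image_mem {e : ℕ} {u : Set (Set ℂ)} (hinv : MuInvariant e u) {ω : ℂ} (hω : ω ^ e = 1)
    {a : Set ℂ} (ha : a ∈ u) : (fun z => ω * z) '' a ∈ u := by
  have h := hinv ω hω
  rw [← h]
  exact ⟨a, ha, rfl⟩

/-- The successor map of a `μ_e`-invariant partition commutes with `μ_e`, since rotations preserve
orientation and a point has only one successor. -/
lemma succ_equivariant {e N : ℕ} (he : 0 < e) {u : Set (Set ℂ)} (hu : IsPartitionOf (mu N) u)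
    (hinv : MuInvariant e u) {σ : ℂ → ℂ} (hσ : IsSuccMapOn u σ) {ω : ℂ} (hω : ω ^ e = 1)
    {z : ℂ} (hz : z ∈ mu N) : σ (ω * z) = ω * σ z := by
  have hω0 : ω ≠ 0 := by
    rintro rfl
    rw [zero_pow he.ne'] at hω
    exact zero_ne_one hω
  obtain ⟨a, ⟨ha, hza⟩, -⟩ := hu.2 z hz
  have hb := image_mem hinv hω ha
  have hzb : ω * z ∈ (fun z => ω * z) '' a := ⟨z, hza, rfl⟩
  by_cases hs : a = {z}
  · rw [(hσ a ha z hza).1 hs, (hσ _ hb _ hzb).1 (by rw [hs, image_singleton])]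
  · obtain ⟨w, hw, hwz⟩ : ∃ w ∈ a, w ≠ z := by
      by_contra hcon
      push Not at hcon
      exact hs (Subset.antisymm hcon (singleton_subset_iff.2 hza))
    obtain ⟨h1, h2⟩ := (succ_det hσ hb hzb (w := ω * w) ⟨w, hw, rfl⟩
      (fun h => hwz (mul_left_cancel₀ hω0 h)))
    obtain ⟨s, hsa, hs'⟩ := succ_mem hσ hb hzb
    simp only at hs'
    by_contra hne
    rw [← hs'] at h1 hne
    have hne' : s ≠ σ z := fun h => hne (by rw [h])
    have hsz : s ≠ z := fun h => h1 (by rw [h])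
    have h3 := (succ_det hσ ha hza hsa hsz).2 hne'
    have h4 := (succ_det hσ hb hzb (w := ω * σ z) ⟨σ z, succ_mem hσ ha hza, rfl⟩
      (fun h => (succ_det hσ ha hza hsa hsz).1 (mul_left_cancel₀ hω0 h).symm)).2
      (fun h => hne (by rw [hs', ← h]))
    rw [← hs', ncDet_mul] at h4
    have h5 : 0 < Complex.normSq ω := Complex.normSq_pos.2 hω0
    have h6 := (mul_pos_iff_of_pos_left h5).1 h4
    rw [ncDet_swap] at h6
    linarith

/-! ### Invariance of the complement under rotations -/

/-- Addition of `m` modulo `N` on indices in `{0, …, N-1}`, for `m` in the same range; it is the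
rotation of `μ_N` by `ζ_N^m`. -/
def idxShift (N m i : ℕ) : ℕ := if i + m < N then i + m else i + m - N

lemma ncPt_idxShift {N : ℕ} (hN : 0 < N) (m i : ℕ) :
    ncPt N (idxShift N m i) = ncPt N m * ncPt N i := by
  unfold idxShift
  rw [← ncPt_add]
  split_ifs with h
  · congr 1; push_cast; ring
  · have : ((m : ℝ) + i) = ((i + m - N : ℕ) : ℝ) + (N : ℕ) := by
      rw [Nat.cast_sub (by omega)]; push_cast; ring
    rw [this, ncPt_add, ncPt_self hN, mul_one]

/-- Whether a chord separates two arcs does not change under a rotation. -/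
lemma idxShift_order {N m i j p q : ℕ} (hi : i < N) (hj : j < N) (hp : p < N)
    (hq : q < N) :
    ((idxShift N m i ≤ idxShift N m p ↔ idxShift N m i ≤ idxShift N m q) ↔
      (idxShift N m j ≤ idxShift N m p ↔ idxShift N m j ≤ idxShift N m q)) ↔
    ((i ≤ p ↔ i ≤ q) ↔ (j ≤ p ↔ j ≤ q)) := by
  unfold idxShift
  split_ifs <;> omega

lemma krew_invariant {e N : ℕ} (hN : 0 < N) (heN : e ∣ N) {u : Set (Set ℂ)}
    (hinv : MuInvariant e u) : MuInvariant e (krew N u) := by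
  have step : ∀ ω : ℂ, ω ^ e = 1 → ∀ a ∈ krew N u, (fun z => ω * z) '' a ∈ krew N u := by
    rintro ω hω _ ⟨i, hi, rfl⟩
    obtain ⟨m, hm, rfl⟩ : ∃ m < N, ω = ncPt N m := by
      apply exists_ncPt hN
      obtain ⟨k, rfl⟩ := heN
      rw [mu, mem_ofPred_eq, pow_mul, hω, one_pow]
    have hlt : ∀ i < N, idxShift N m i < N := by
      intro i hi; unfold idxShift; split_ifs <;> omega
    have hsurj : ∀ i < N, ∃ j < N, i = idxShift N m j := by
      intro i hi
      refine ⟨if m ≤ i then i - m else i + N - m, ?_, ?_⟩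
      · split_ifs <;> omega
      · unfold idxShift; split_ifs <;> omega
    have hE : ∀ p q, SamePart N u (idxShift N m p) (idxShift N m q) ↔ SamePart N u p q := by
      intro p q
      have hne : ncPt N m ≠ 0 := Complex.exp_ne_zero _
      constructor
      · rintro ⟨a, ha, h1, h2⟩
        have : a ∈ rotate (ncPt N m) u := by rw [hinv _ hω]; exact ha
        obtain ⟨b, hb, rfl⟩ := this
        rw [ncPt_idxShift hN] at h1 h2
        obtain ⟨x, hx, hx'⟩ := h1
        obtain ⟨y, hy, hy'⟩ := h2
        obtain rfl := mul_left_cancel₀ hne hx'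
        obtain rfl := mul_left_cancel₀ hne hy'
        exact ⟨b, hb, hx, hy⟩
      · rintro ⟨a, ha, h1, h2⟩
        refine ⟨_, image_mem hinv hω ha, ?_, ?_⟩ <;> rw [ncPt_idxShift hN]
        · exact ⟨_, h1, rfl⟩
        · exact ⟨_, h2, rfl⟩
    have hG : ∀ i < N, ∀ j < N, SameGap N u (idxShift N m i) (idxShift N m j) ↔
        SameGap N u i j := by
      intro i hi j hj
      constructor
      · intro h p hp q hq hpq
        exact (idxShift_order hi hj hp hq).1 (h _ (hlt p hp) _ (hlt q hq) ((hE p q).2 hpq))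
      · intro h p hp q hq hpq
        obtain ⟨p', hp', rfl⟩ := hsurj p hp
        obtain ⟨q', hq', rfl⟩ := hsurj q hq
        exact (idxShift_order hi hj hp' hq').2 (h _ hp' _ hq' ((hE p' q').1 hpq))
    refine ⟨idxShift N m i, hlt i hi, ?_⟩
    ext z
    constructor
    · rintro ⟨_, ⟨j, hj, rfl, h⟩, rfl⟩
      exact ⟨_, hlt j hj, (ncPt_idxShift hN m j).symm, (hG i hi j hj).2 h⟩
    · rintro ⟨j, hj, rfl, h⟩
      obtain ⟨k, hk, rfl⟩ := hsurj j hj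
      exact ⟨_, ⟨k, hk, rfl, (hG i hi k hk).1 h⟩, (ncPt_idxShift hN m k).symm⟩
  intro ω hω
  apply Subset.antisymm
  · rintro _ ⟨a, ha, rfl⟩
    exact step ω hω a ha
  · intro a ha
    by_cases hω0 : ω = 0
    · subst hω0
      -- `0 ^ e = 1` only for `e = 0`, and then `N = 0`.
      rcases Nat.eq_zero_or_pos e with rfl | he
      · exact absurd (Nat.eq_zero_of_zero_dvd heN) hN.ne'
      · rw [zero_pow he.ne'] at hω
        exact absurd hω zero_ne_one
    · refine ⟨_, step ω⁻¹ (by rw [inv_pow, hω, inv_one]) a ha, ?_⟩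
      simp only
      rw [image_image]
      simp [mul_inv_cancel_left₀ hω0]

/-! ### Long parts -/

/-- A part containing two distinct points of the same `μ_e`-orbit, with quotient `ω`, makes the
partition long: it then contains all `ω^k z`, whose barycentre is `0`. -/
lemma isLong_of_smul_mem {e : ℕ} {x : Set ℂ} {u : Set (Set ℂ)} (he : 0 < e)
    (hu : IsPartitionOf x u) (hinv : MuInvariant e u) {a : Set ℂ} (ha : a ∈ u) {z ω : ℂ}
    (hω : ω ^ e = 1) (hω1 : ω ≠ 1) (hz : z ∈ a) (hωz : ω * z ∈ a) : IsLong u := by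
  have h := part_eq hu (image_mem hinv hω ha) ha ⟨z, hz, rfl⟩ hωz
  have hk : ∀ k : ℕ, ω ^ k * z ∈ a := by
    intro k
    induction k with
    | zero => simpa using hz
    | succ k ih =>
      rw [← h]
      exact ⟨_, ih, by ring⟩
  refine ⟨a, ha, ?_⟩
  have hs := (convex_convexHull ℝ a).sum_mem (t := Finset.range e) (w := fun _ => (1 / e : ℝ))
    (z := fun k => ω ^ k * z) (fun _ _ => by positivity)
    (by simp [he.ne']) (fun k _ => subset_convexHull ℝ a (hk k))
  have h0 : ∑ k ∈ Finset.range e, ω ^ k = 0 := by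
    rw [geom_sum_eq hω1, hω, sub_self, zero_div]
  rwa [← Finset.smul_sum, ← Finset.sum_mul, h0, zero_mul, smul_zero] at hs

/-- A long part and its rotates all have `0` in their hulls, so they coincide. -/
lemma long_part_invariant {e : ℕ} {u : Set (Set ℂ)} (hnc : IsNoncrossing u)
    (hinv : MuInvariant e u) {a : Set ℂ} (ha : a ∈ u) (h0 : (0 : ℂ) ∈ convexHull ℝ a) {ω : ℂ}
    (hω : ω ^ e = 1) : (fun z => ω * z) '' a = a := by
  refine hnc _ (image_mem hinv hω ha) _ ha ⟨0, ?_, h0⟩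
  have h := (LinearMap.mulLeft ℝ ω).image_convexHull a
  have h2 : (0 : ℂ) ∈ (LinearMap.mulLeft ℝ ω) '' convexHull ℝ a := ⟨0, h0, by simp⟩
  rw [h] at h2
  exact h2

/-- The long part contains a chord joining some `r < n` to `r + n`. -/
lemma long_indices {e n : ℕ} (he : 2 ≤ e) (hn : 0 < n) {u : Set (Set ℂ)}
    (hu : u ∈ NCPmu e n) (hl : IsLong u) :
    ∃ a ∈ u, ∃ r < n, ncPt (e * n) r ∈ a ∧ ncPt (e * n) (r + n : ℕ) ∈ a := by
  obtain ⟨hp, hnc, hinv⟩ := hu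
  obtain ⟨a, ha, h0⟩ := hl
  have hN : 0 < e * n := by positivity
  have hω : ∀ k : ℕ, ncPt (e * n) (k * n : ℕ) ^ e = 1 := by
    intro k
    rw [ncPt_nat, ← pow_mul, mul_assoc, mul_comm n e, mul_comm k, pow_mul,
      (zeta_prim hN).pow_eq_one, one_pow]
  have hstep : ∀ k j : ℕ, ncPt (e * n) j ∈ a → ncPt (e * n) (j + k * n : ℕ) ∈ a := by
    intro k j hj
    rw [← long_part_invariant hnc hinv ha h0 (hω k)]
    refine ⟨_, hj, ?_⟩
    simp only
    rw [← ncPt_add]; congr 1; push_cast; ring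
  obtain ⟨⟨z, hz⟩, hsub⟩ := hp.1 a ha
  obtain ⟨k, hk, rfl⟩ := exists_ncPt hN (hsub hz)
  -- Adding `e - k / n` multiples of `n` to `k` reaches `k % n` modulo `e * n`.
  have hr : ncPt (e * n) (k % n : ℕ) ∈ a := by
    have h1 := hstep (e - k / n) k hz
    have h2 : k / n < e := Nat.div_lt_of_lt_mul (by rwa [mul_comm])
    have h3 : k + (e - k / n) * n = k % n + e * n := by
      have h4 := Nat.div_add_mod k n
      obtain ⟨d, hd⟩ := Nat.exists_eq_add_of_lt h2
      have h5 : e - k / n = d + 1 := by omega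
      rw [h5, hd]
      nlinarith
    rw [h3, Nat.cast_add, ncPt_add, ncPt_self hN, mul_one] at h1
    exact h1
  refine ⟨a, ha, k % n, Nat.mod_lt _ hn, hr, ?_⟩
  have := hstep 1 _ hr
  rwa [one_mul] at this

/-- An element `u` and its complement are not both long: the chord from `r` to `r + n` in the long
part of `u` would separate the arcs at `j` and `j + n`, for the chord from `j` to `j + n` in the
long part of `w`. The hypothesis `hg` says that the parts of `w` lie in the classes of the
Kreweras complement of `u`. -/
lemma not_both_long {e n : ℕ} (he : 2 ≤ e) (hn : 0 < n) {u w : Set (Set ℂ)}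
    (hu : u ∈ NCPmu e n) (hw : w ∈ NCPmu e n)
    (hg : ∀ i j : ℕ, i < j → j < e * n → SamePart (e * n) w i j → SameGap (e * n) u i j)
    (hlu : IsLong u) (hlw : IsLong w) : False := by
  obtain ⟨a, ha, r, hr, hra, hra'⟩ := long_indices he hn hu hlu
  obtain ⟨b, hb, j, hj, hjb, hjb'⟩ := long_indices he hn hw hlw
  have h2n : 2 * n ≤ e * n := Nat.mul_le_mul_right n he
  have := hg j (j + n) (by omega) (by omega) ⟨b, hb, hjb, hjb'⟩ r (by omega) (r + n) (by omega)
    ⟨a, ha, hra, hra'⟩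
  omega

/-! ### Transversals of the `μ_e`-action and short elements -/

/-- `T` contains exactly one element of each `μ_e`-orbit in `μ_N`; when `e` divides `N`, these
orbits are the fibres of `z ↦ z^e`. -/
def IsTransversal (e N : ℕ) (T : Finset ℂ) : Prop :=
  (∀ t ∈ T, t ∈ mu N) ∧ ∀ z ∈ mu N, ∃! t, t ∈ T ∧ t ^ e = z ^ e

lemma mu_ne_zero {N : ℕ} (hN : 0 < N) {z : ℂ} (hz : z ∈ mu N) : z ≠ 0 := by
  rintro rfl
  have : (0 : ℂ) ^ N = 1 := hz
  rw [zero_pow hN.ne'] at this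
  exact zero_ne_one this

lemma exists_smul {e N : ℕ} (hN : 0 < N) {s t : ℂ} (hs : s ∈ mu N) (h : t ^ e = s ^ e) :
    ∃ ω : ℂ, ω ^ e = 1 ∧ t = ω * s := by
  have hs0 := mu_ne_zero hN hs
  exact ⟨t / s, by rw [div_pow, h, div_self (pow_ne_zero _ hs0)], (div_mul_cancel₀ _ hs0).symm⟩

lemma smul_mem_mu {e n : ℕ} {ω z : ℂ} (hω : ω ^ e = 1) (hz : z ∈ mu (e * n)) :
    ω * z ∈ mu (e * n) := by
  have hz : z ^ (e * n) = 1 := hz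
  rw [mu, mem_ofPred_eq, mul_pow, hz, pow_mul, hω, one_pow, one_mul]

lemma prod_transversal {e N : ℕ} (hN : 0 < N) {S T : Finset ℂ} (hS : IsTransversal e N S)
    (hT : IsTransversal e N T) {g : ℂ → ℂ}
    (hg : ∀ z ∈ mu N, ∀ ω : ℂ, ω ^ e = 1 → g (ω * z) = g z) :
    ∏ z ∈ S, g z = ∏ z ∈ T, g z := by
  have H : ∀ z ∈ S, ∃ t, t ∈ T ∧ t ^ e = z ^ e := fun z hz => (hT.2 z (hS.1 z hz)).exists
  choose! f hfT hf using H
  refine Finset.prod_bij (fun z _ => f z) (fun z hz => hfT z hz) ?_ ?_ ?_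
  · intro z hz w hw h
    have h' : z ^ e = w ^ e := by rw [← hf z hz, ← hf w hw, h]
    exact (hS.2 w (hS.1 w hw)).unique ⟨hz, h'⟩ ⟨hw, rfl⟩
  · intro t ht
    obtain ⟨s, ⟨hs, hse⟩, -⟩ := hS.2 t (hT.1 t ht)
    exact ⟨s, hs, (hT.2 t (hT.1 t ht)).unique ⟨hfT s hs, by rw [hf s hs, hse]⟩ ⟨ht, rfl⟩⟩
  · intro z hz
    obtain ⟨ω, hω, h⟩ := exists_smul hN (hS.1 z hz) (hf z hz)
    rw [h, hg z (hS.1 z hz) ω hω]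

/-- A short element has a transversal of the `μ_e`-action which is a union of parts: by
`isLong_of_smul_mem` a part meets every orbit at most once, so the union of one part from each
`μ_e`-orbit of parts is such a transversal. -/
lemma exists_stable_transversal {e n : ℕ} (he : 0 < e) (hN : 0 < e * n) {u : Set (Set ℂ)}
    (hu : IsPartitionOf (mu (e * n)) u) (hinv : MuInvariant e u) (hs : ¬ IsLong u) :
    ∃ T : Finset ℂ, IsTransversal e (e * n) T ∧ ∀ a ∈ u, ∀ z ∈ a, ∀ w ∈ a, z ∈ T → w ∈ T := by
  let orb : Set ℂ → Set (Set ℂ) := fun a => {b | ∃ ω : ℂ, ω ^ e = 1 ∧ b = (fun z => ω * z) '' a}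
  have hne : ∀ a, (orb a).Nonempty := fun a => ⟨_, 1, one_pow e, rfl⟩
  have horb : ∀ a, ∀ ω : ℂ, ω ^ e = 1 → orb ((fun z => ω * z) '' a) = orb a := by
    intro a ω hω
    have hω0 : ω ≠ 0 := by
      rintro rfl
      rw [zero_pow he.ne'] at hω
      exact zero_ne_one hω
    ext b
    constructor
    · rintro ⟨η, hη, rfl⟩
      refine ⟨η * ω, by rw [mul_pow, hη, hω, one_mul], ?_⟩
      rw [image_image]
      simp only [mul_assoc]
    · rintro ⟨η, hη, rfl⟩
      refine ⟨η * ω⁻¹, by rw [mul_pow, inv_pow, hη, hω, inv_one, one_mul], ?_⟩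
      rw [image_image]
      simp only [mul_assoc, inv_mul_cancel_left₀ hω0]
  let rep : Set ℂ → Set ℂ := fun a => (hne a).some
  have hrep : ∀ a, ∃ ω : ℂ, ω ^ e = 1 ∧ rep a = (fun z => ω * z) '' a := fun a => (hne a).some_mem
  have hrep' : ∀ a, ∀ ω : ℂ, ω ^ e = 1 → rep ((fun z => ω * z) '' a) = rep a := by
    intro a ω hω
    simp only [rep, horb a ω hω]
  have hfin : {z | z ∈ mu (e * n) ∧ ∃ a ∈ u, z ∈ a ∧ rep a = a}.Finite :=
    (mu_finite hN).subset fun z hz => hz.1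
  refine ⟨hfin.toFinset, ⟨fun t ht => (hfin.mem_toFinset.1 ht).1, ?_⟩, ?_⟩
  · intro z hz
    obtain ⟨a, ⟨ha, hza⟩, -⟩ := hu.2 z hz
    obtain ⟨ω, hω, h⟩ := hrep a
    refine ⟨ω * z, ⟨hfin.mem_toFinset.2 ⟨smul_mem_mu hω hz, _, image_mem hinv hω ha, ⟨z, hza, rfl⟩,
      by rw [hrep' a ω hω, h]⟩, by rw [mul_pow, hω, one_mul]⟩, ?_⟩
    intro t ⟨ht, hte⟩
    have hmul : (ω * z) ^ e = t ^ e := by rw [mul_pow, hω, one_mul, hte]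
    obtain ⟨htm, b, hb, htb, hbr⟩ := hfin.mem_toFinset.1 ht
    obtain ⟨η, hη, h'⟩ := exists_smul hN htm hmul
    have e1 : (fun z => η * z) '' b = (fun z => ω * z) '' a :=
      part_eq hu (image_mem hinv hη hb) (image_mem hinv hω ha) (z := ω * z)
        ⟨t, htb, h'.symm⟩ ⟨z, hza, rfl⟩
    -- Both parts represent the same orbit, so they coincide, and shortness forces `η = 1`.
    have e2 : b = (fun z => ω * z) '' a := by
      rw [← hbr, ← hrep' b η hη, e1, hrep' a ω hω, h]
    by_contra hcon
    have hη1 : η ≠ 1 := by rintro rfl; exact hcon (by rw [h', one_mul])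
    refine hs (isLong_of_smul_mem he hu hinv hb hη hη1 htb ?_)
    rw [e2, ← h']
    exact ⟨z, hza, rfl⟩
  · intro a ha z hz w hw hzT
    obtain ⟨-, b, hb, hzb, hbr⟩ := hfin.mem_toFinset.1 hzT
    obtain rfl := part_eq hu ha hb hz hzb
    exact hfin.mem_toFinset.2 ⟨(hu.1 a ha).2 hw, a, ha, hw, hbr⟩

/-- If `σ` permutes each part of a short element, then `∏ σ(z)/z = 1` over any transversal: the
factors are constant on `μ_e`-orbits, and on a transversal stable under `σ` numerator and
denominator have the same product. -/
lemma prod_ratio_short {e n : ℕ} (he : 0 < e) (hN : 0 < e * n) {u : Set (Set ℂ)}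
    (hu : IsPartitionOf (mu (e * n)) u) (hinv : MuInvariant e u) (hs : ¬ IsLong u) {σ : ℂ → ℂ}
    (hpart : ∀ a ∈ u, ∀ z ∈ a, σ z ∈ a) (hinj : InjOn σ (mu (e * n)))
    (heq : ∀ z ∈ mu (e * n), ∀ ω : ℂ, ω ^ e = 1 → σ (ω * z) = ω * σ z) {S : Finset ℂ}
    (hS : IsTransversal e (e * n) S) : ∏ z ∈ S, σ z / z = 1 := by
  obtain ⟨T, hT, hst⟩ := exists_stable_transversal he hN hu hinv hs
  rw [prod_transversal hN hS hT]
  · have hmaps : ∀ z ∈ T, σ z ∈ T := by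
      intro z hz
      obtain ⟨a, ⟨ha, hza⟩, -⟩ := hu.2 z (hT.1 z hz)
      exact hst a ha z hza _ (hpart a ha z hza) hz
    have hinjT : InjOn σ T := hinj.mono hT.1
    have him : T.image σ = T :=
      Finset.eq_of_subset_of_card_le (Finset.image_subset_iff.2 hmaps)
        (Finset.card_image_of_injOn hinjT).ge
    have hprod : ∏ z ∈ T, σ z = ∏ z ∈ T, z := by
      conv_rhs => rw [← him]
      rw [Finset.prod_image hinjT]
    rw [Finset.prod_div_distrib, hprod, div_self]
    exact Finset.prod_ne_zero_iff.2 fun z hz => mu_ne_zero hN (hT.1 z hz)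
  · intro z hz ω hω
    have hω0 : ω ≠ 0 := by
      rintro rfl
      rw [zero_pow he.ne'] at hω
      exact zero_ne_one hω
    rw [heq z hz ω hω, mul_div_mul_left _ _ hω0]

/-- The points `ζ_{en}^k` with `0 ≤ k < n` form a transversal. -/
lemma standard_transversal {e n : ℕ} (he : 0 < e) (hn : 0 < n) :
    IsTransversal e (e * n) ((Finset.range n).image fun k : ℕ => ncPt (e * n) k) := by
  have hN : 0 < e * n := by positivity
  have hpow : ∀ k : ℕ, ncPt (e * n) k ^ e = zeta n ^ k := by
    intro k
    have hne : (e : ℂ) ≠ 0 := by exact_mod_cast he.ne'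
    rw [ncPt_nat, zeta, zeta, ← Complex.exp_nat_mul, ← Complex.exp_nat_mul, ← Complex.exp_nat_mul]
    congr 1
    push_cast
    field_simp
  have hmodpow : ∀ k : ℕ, zeta n ^ (k % n) = zeta n ^ k := by
    intro k
    conv_rhs => rw [← Nat.mod_add_div k n, pow_add, pow_mul, (zeta_prim hn).pow_eq_one, one_pow,
      mul_one]
  refine ⟨?_, ?_⟩
  · intro t ht
    obtain ⟨k, -, rfl⟩ := Finset.mem_image.1 ht
    exact ncPt_mem _ _ hN
  · intro z hz
    obtain ⟨k, hk, rfl⟩ := exists_ncPt hN hz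
    refine ⟨ncPt (e * n) (k % n : ℕ), ⟨Finset.mem_image.2 ⟨k % n,
      Finset.mem_range.2 (Nat.mod_lt _ hn), rfl⟩, by rw [hpow, hpow, hmodpow]⟩, ?_⟩
    rintro t ⟨ht, h⟩
    obtain ⟨j, hj, rfl⟩ := Finset.mem_image.1 ht
    simp only [hpow] at h
    rw [← hmodpow k] at h
    rw [(zeta_prim hn).pow_inj (Finset.mem_range.1 hj) (Nat.mod_lt _ hn) h]

lemma surj_of_injOn {N : ℕ} (hN : 0 < N) {σ : ℂ → ℂ} (hmaps : MapsTo σ (mu N) (mu N))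
    (hinj : InjOn σ (mu N)) : SurjOn σ (mu N) (mu N) :=
  (((mu_finite hN).injOn_iff_bijOn_of_mapsTo hmaps).1 hinj).surjOn

lemma maps_mu {N : ℕ} {u : Set (Set ℂ)} (hu : IsPartitionOf (mu N) u) {σ : ℂ → ℂ}
    (hpart : ∀ a ∈ u, ∀ z ∈ a, σ z ∈ a) : MapsTo σ (mu N) (mu N) := by
  intro z hz
  obtain ⟨a, ⟨ha, hza⟩, -⟩ := hu.2 z hz
  exact (hu.1 a ha).2 (hpart a ha z hza)

/-- Maps `σ` and `τ` permuting the parts of two short elements, with `τ σ` the multiplication by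
`ζ_{en}`, would give `ζ_{en}^n = 1` on taking the product of `τ(σ(z))/z` over the `n` elements of
a transversal; this is impossible for `e ≥ 2`. -/
lemma not_both_short {e n : ℕ} (he : 2 ≤ e) (hn : 0 < n) {u w : Set (Set ℂ)}
    (hu : u ∈ NCPmu e n) (hw : w ∈ NCPmu e n) {σ τ : ℂ → ℂ}
    (hσ : ∀ a ∈ u, ∀ z ∈ a, σ z ∈ a) (hσi : InjOn σ (mu (e * n)))
    (hσe : ∀ z ∈ mu (e * n), ∀ ω : ℂ, ω ^ e = 1 → σ (ω * z) = ω * σ z)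
    (hτ : ∀ a ∈ w, ∀ z ∈ a, τ z ∈ a) (hτi : InjOn τ (mu (e * n)))
    (hτe : ∀ z ∈ mu (e * n), ∀ ω : ℂ, ω ^ e = 1 → τ (ω * z) = ω * τ z)
    (hc : ∀ z ∈ mu (e * n), τ (σ z) = zeta (e * n) * z)
    (hsu : ¬ IsLong u) (hsw : ¬ IsLong w) : False := by
  have he0 : 0 < e := by omega
  have hN : 0 < e * n := by positivity
  have hmaps := maps_mu hu.1 hσ
  have hsurj := surj_of_injOn hN hmaps hσi
  set S : Finset ℂ := (Finset.range n).image fun k : ℕ => ncPt (e * n) k with hSdef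
  have hS : IsTransversal e (e * n) S := standard_transversal he0 hn
  have hσS : IsTransversal e (e * n) (S.image σ) := by
    constructor
    · intro t ht
      obtain ⟨s, hs, rfl⟩ := Finset.mem_image.1 ht
      exact hmaps (hS.1 s hs)
    · intro y hy
      obtain ⟨z, hz, rfl⟩ := hsurj hy
      obtain ⟨s, ⟨hs, hse⟩, -⟩ := hS.2 z hz
      have hpow : ∀ t ∈ mu (e * n), ∀ s ∈ mu (e * n), t ^ e = s ^ e → σ t ^ e = σ s ^ e := by
        intro t ht s hs h
        obtain ⟨ω, hω, rfl⟩ := exists_smul hN hs h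
        rw [hσe s hs ω hω, mul_pow, hω, one_mul]
      refine ⟨σ s, ⟨Finset.mem_image_of_mem _ hs, hpow s (hS.1 s hs) z hz hse⟩, ?_⟩
      rintro _ ⟨ht, h⟩
      obtain ⟨t, htS, rfl⟩ := Finset.mem_image.1 ht
      obtain ⟨ω, hω, h'⟩ := exists_smul hN (hmaps hz) h
      rw [← hσe z hz ω hω] at h'
      have h'' := hσi (hS.1 t htS) (smul_mem_mu hω hz) h'
      rw [(hS.2 z hz).unique ⟨htS, by rw [h'', mul_pow, hω, one_mul]⟩ ⟨hs, hse⟩]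
  have h1 := prod_ratio_short he0 hN hu.1 hu.2.2 hsu hσ hσi hσe hS
  have h2 := prod_ratio_short he0 hN hw.1 hw.2.2 hsw hτ hτi hτe hσS
  rw [Finset.prod_image (hσi.mono hS.1)] at h2
  have h3 : ∏ z ∈ S, zeta (e * n) = 1 := by
    calc ∏ z ∈ S, zeta (e * n) = ∏ z ∈ S, τ (σ z) / σ z * (σ z / z) := by
          refine Finset.prod_congr rfl fun z hz => ?_
          have hz0 := mu_ne_zero hN (hS.1 z hz)
          have hσ0 := mu_ne_zero hN (hmaps (hS.1 z hz))
          rw [hc z (hS.1 z hz)]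
          field_simp
      _ = 1 := by rw [Finset.prod_mul_distrib, h1, h2, one_mul]
  have hcard : S.card = n := by
    rw [hSdef, Finset.card_image_of_injOn, Finset.card_range]
    intro i hi j hj h
    have hle : n ≤ e * n := Nat.le_mul_of_pos_left n he0
    have hi := Finset.mem_range.1 (Finset.mem_coe.1 hi)
    have hj := Finset.mem_range.1 (Finset.mem_coe.1 hj)
    exact ncPt_inj hN (by omega) (by omega) h
  rw [Finset.prod_const, hcard] at h3
  have hle := Nat.le_of_dvd hn ((zeta_prim hN).dvd_of_pow_eq_one n h3)
  have : 2 * n ≤ e * n := Nat.mul_le_mul_right n he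
  omega

/-! ### Exchange of long and short elements -/

lemma zeta_smul {N i : ℕ} (hN : 0 < N) (hi : i < N) :
    zeta N * ncPt N i = ncPt N (if i + 1 < N then i + 1 else 0 : ℕ) := by
  have h1 : zeta N * ncPt N i = ncPt N (i + 1 : ℕ) := by rw [ncPt_nat, ncPt_nat, pow_succ']
  rw [h1]
  split_ifs with h
  · rfl
  · have : i + 1 = N := by omega
    rw [this, ncPt_self hN, ncPt_nat, pow_zero]

/-- The successor map of the trivial partition is the rotation by `ζ_N`. -/
lemma succ_mu {N : ℕ} (hN : 2 ≤ N) {σ : ℂ → ℂ} (hσ : IsSuccMapOn ({mu N} : Set (Set ℂ)) σ)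
    {z : ℂ} (hz : z ∈ mu N) : σ z = zeta N * z := by
  have hN0 : 0 < N := by omega
  obtain ⟨i, hi, rfl⟩ := exists_ncPt hN0 hz
  have hm := succ_mem hσ (mem_singleton _) hz
  obtain ⟨j, hj, hij⟩ := exists_ncPt hN0 hm
  rw [zeta_smul hN0 hi, hij]
  set k := if i + 1 < N then i + 1 else 0 with hk
  by_cases hkj : k = j
  · rw [hkj]
  · have hkN : k < N := by rw [hk]; split_ifs <;> omega
    have hki : k ≠ i := by rw [hk]; split_ifs <;> omega
    have h := succ_not_between hN0 hσ (mem_singleton _) hi hj hkN hz hij (ncPt_mem N k hN0) hki hkj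
    split_ifs at hk <;> omega

lemma krew_mem {e n : ℕ} (he : 0 < e) (hn : 0 < n) {u : Set (Set ℂ)} (hu : u ∈ NCPmu e n) :
    krew (e * n) u ∈ NCPmu e n := by
  have hN : 0 < e * n := by positivity
  exact ⟨krew_partition hN u, krew_noncrossing hN u, krew_invariant hN ⟨n, rfl⟩ hu.2.2⟩

/-- The geometric complement exchanges long and short. For the implication from short to long,
`τ = ζ_{en} σ⁻¹`, with `σ` the successor map of `u`, maps every part of the complement into itself
by `sameGap_succ`. -/
lemma isLong_krew {e n : ℕ} (he : 2 ≤ e) (hn : 0 < n) {u : Set (Set ℂ)} (hu : u ∈ NCPmu e n) :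
    IsLong (krew (e * n) u) ↔ ¬ IsLong u := by
  have he0 : 0 < e := by omega
  have hN : 0 < e * n := by positivity
  have hk := krew_mem he0 hn hu
  constructor
  · intro h h'
    exact not_both_long he hn hu hk
      (fun i j hij hj h => sameGap_of_mem_krew hN (by omega) hj h) h' h
  · intro h
    by_contra h'
    obtain ⟨σ, hσ⟩ := exists_succMap hN hu.1
    have hpart : ∀ a ∈ u, ∀ z ∈ a, σ z ∈ a := fun a ha z hz => succ_mem hσ ha hz
    have hmaps := maps_mu hu.1 hpart
    have hinj := succ_injOn hu.1 hσ
    have hsurj := surj_of_injOn hN hmaps hinj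
    have hσe : ∀ z ∈ mu (e * n), ∀ ω : ℂ, ω ^ e = 1 → σ (ω * z) = ω * σ z :=
      fun z hz ω hω => succ_equivariant he0 hu.1 hu.2.2 hσ hω hz
    let τ : ℂ → ℂ := fun y => zeta (e * n) * Function.invFunOn σ (mu (e * n)) y
    have hτ : ∀ z ∈ mu (e * n), τ (σ z) = zeta (e * n) * z := by
      intro z hz
      simp only [τ]
      rw [hinj.leftInvOn_invFunOn hz]
    have hζ0 : zeta (e * n) ≠ 0 := Complex.exp_ne_zero _
    refine not_both_short he hn hu hk hpart hinj hσe ?_ ?_ ?_ hτ h h'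
    · intro a ha y hy
      obtain ⟨z, hz, rfl⟩ := hsurj ((hk.1.1 a ha).2 hy)
      rw [hτ z hz]
      obtain ⟨i, hi, rfl⟩ := exists_ncPt hN hz
      obtain ⟨j, hj, hij⟩ := exists_ncPt hN (hmaps hz)
      rw [hij] at hy
      rw [zeta_smul hN hi]
      have hlt : (if i + 1 < e * n then i + 1 else 0) < e * n := by split_ifs <;> omega
      obtain ⟨b, hb, hjb, hib⟩ := samePart_krew hj hlt (sameGap_succ hN hu.1 hu.2.1 hσ hi hj hij)
      rwa [part_eq hk.1 ha hb hy hjb]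
    · intro y hy y' hy' hyy
      obtain ⟨z, hz, rfl⟩ := hsurj hy
      obtain ⟨z', hz', rfl⟩ := hsurj hy'
      rw [hτ z hz, hτ z' hz'] at hyy
      rw [mul_left_cancel₀ hζ0 hyy]
    · intro y hy ω hω
      obtain ⟨z, hz, rfl⟩ := hsurj hy
      rw [← hσe z hz ω hω, hτ z hz, hτ _ (smul_mem_mu hω hz)]
      ring

/-- The same exchange for any `w` in `NCP(e,1,n)` with `σ_w σ_u` the rotation by `ζ_{en}`. By
`sameGap_succ`, `σ_w` stays inside the classes of the geometric complement of `u`, hence so do the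
parts of `w`. -/
lemma isLong_iff_of_succ {e n : ℕ} (he : 2 ≤ e) (hn : 0 < n) {u w : Set (Set ℂ)}
    (hu : u ∈ NCPmu e n) (hw : w ∈ NCPmu e n) {σ τ : ℂ → ℂ} (hσ : IsSuccMapOn u σ)
    (hτ : IsSuccMapOn w τ) (hc : ∀ z ∈ mu (e * n), τ (σ z) = zeta (e * n) * z) :
    IsLong u ↔ ¬ IsLong w := by
  have he0 : 0 < e := by omega
  have hN : 0 < e * n := by positivity
  have hσp : ∀ a ∈ u, ∀ z ∈ a, σ z ∈ a := fun a ha z hz => succ_mem hσ ha hz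
  constructor
  · intro h h'
    refine not_both_long he hn hu hw ?_ h h'
    rintro i j hij hj ⟨b, hb, hib, hjb⟩
    refine rel_of_mem_part hN hw.1 hτ (R := SameGap (e * n) u) (fun _ _ _ => SameGap.trans) hb ?_
      (j - i) i j rfl hij hj hib hjb
    intro i hi j hj _ hij
    obtain ⟨z, hz, hzi⟩ := surj_of_injOn hN (maps_mu hu.1 hσp) (succ_injOn hu.1 hσ)
      (ncPt_mem (e * n) i hN)
    obtain ⟨k, hk, rfl⟩ := exists_ncPt hN hz
    have h1 := sameGap_succ hN hu.1 hu.2.1 hσ hk hi hzi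
    have h2 := hc _ hz
    rw [hzi, hij, zeta_smul hN hk] at h2
    have hlt : (if k + 1 < e * n then k + 1 else 0) < e * n := by split_ifs <;> omega
    rwa [ncPt_inj hN hj hlt h2]
  · intro h'
    by_contra h
    exact not_both_short he hn hu hw hσp (succ_injOn hu.1 hσ)
      (fun z hz ω hω => succ_equivariant he0 hu.1 hu.2.2 hσ hω hz)
      (fun a ha z hz => succ_mem hτ ha hz) (succ_injOn hw.1 hτ)
      (fun z hz ω hω => succ_equivariant he0 hw.1 hw.2.2 hτ hω hz) hc h h'

lemma NCPmu_finite {e n : ℕ} (hN : 0 < e * n) : (NCPmu e n).Finite := by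
  refine ((mu_finite hN).finite_subsets.finite_subsets).subset ?_
  intro u hu a ha
  exact (hu.1.1 a ha).2

lemma krew_injective {e n : ℕ} (he : 0 < e) (hn : 0 < n) :
    InjOn (krew (e * n)) (NCPmu e n) := by
  have hN : 0 < e * n := by positivity
  intro u hu v hv h
  obtain ⟨σ, hσ⟩ := exists_succMap hN hu.1
  obtain ⟨τ, hτ⟩ := exists_succMap hN hv.1
  have H : ∀ p < e * n, ∀ q < e * n, SamePart (e * n) u p q ↔ SamePart (e * n) v p q :=
    fun p hp q hq => ⟨krew_injOn hN hv.1 hv.2.1 hτ h hp hq,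
      krew_injOn hN hu.1 hu.2.1 hσ h.symm hp hq⟩
  exact Subset.antisymm (part_subset_of_samePart hN hu.1 hv.1 H)
    (part_subset_of_samePart hN hv.1 hu.1 fun p hp q hq => (H p hp q hq).symm)

/-- In `NCP(e,1,n)` (e ≥ 2): every long element has a unique long part; the
Kreweras complement map `u ↦ ū` (characterized by `σ_u σ_ū = σ_triv`)
exchanges long and short elements; consequently the number of long elements
equals the number of short elements. -/
theorem stmt7 (e n : ℕ) (he : 2 ≤ e) (hn : 0 < n) :
    (∀ u ∈ NCPmu e n, IsLong u → ∃! a, a ∈ u ∧ (0 : ℂ) ∈ convexHull ℝ a) ∧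
    (∀ u ∈ NCPmu e n, ∀ w ∈ NCPmu e n, ∀ σu σw σc : ℂ → ℂ,
      IsSuccMapOn u σu → IsSuccMapOn w σw →
      IsSuccMapOn ({mu (e * n)} : Set (Set ℂ)) σc →
      (∀ z ∈ mu (e * n), σw (σu z) = σc z) →
      (IsLong u ↔ ¬ IsLong w)) ∧
    {u | u ∈ NCPmu e n ∧ IsLong u}.ncard =
      {u | u ∈ NCPmu e n ∧ ¬ IsLong u}.ncard := by
  have he0 : 0 < e := by omega
  have hN : 0 < e * n := by positivity
  have hN2 : 2 ≤ e * n := le_trans he (Nat.le_mul_of_pos_right e hn)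
  refine ⟨?_, ?_, ?_⟩
  · rintro u ⟨-, hnc, -⟩ ⟨a, ha, h0⟩
    exact ⟨a, ⟨ha, h0⟩, fun b ⟨hb, hb0⟩ => hnc b hb a ha ⟨0, hb0, h0⟩⟩
  · intro u hu w hw σu σw σc hσu hσw hσc hc
    exact isLong_iff_of_succ he hn hu hw hσu hσw fun z hz => by rw [hc z hz, succ_mu hN2 hσc hz]
  · apply le_antisymm
    · refine ncard_le_ncard_of_injOn (krew (e * n)) ?_ ?_
        ((NCPmu_finite hN).subset fun u hu => hu.1)
      · rintro u ⟨hu, hl⟩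
        exact ⟨krew_mem he0 hn hu, fun h => (isLong_krew he hn hu).1 h hl⟩
      · exact (krew_injective he0 hn).mono fun u hu => hu.1
    · refine ncard_le_ncard_of_injOn (krew (e * n)) ?_ ?_
        ((NCPmu_finite hN).subset fun u hu => hu.1)
      · rintro u ⟨hu, hl⟩
        exact ⟨krew_mem he0 hn hu, (isLong_krew he hn hu).2 hl⟩
      · exact (krew_injective he0 hn).mono fun u hu => hu.1
end
end

section
/- In NCP(e,e,n+1), the complement of the minimal asymmetric element m_ζ (whose only non-singleton part is {0, ζ}) in the trivial partition is the maximal asymmetric element M_ζ, and the complement of M_ζ in the trivial partition is ζ_{en}^{n+1} m_ζ. Consequently, for any minimal or maximal asymmetric element x, the double complement satisfies x̄̄ = ζ_{en}^{n+1} x. -/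
/-!
Write `z_k = ζ_{en} ^ k ζ`. Since `n ≤ en / 2`, the points `0, z_1, …, z_n` of `a_ζ` are in convex
position, with counterclockwise order `0 → z_1 → ⋯ → z_n → 0`; this reduces to the sign of the
area of triangles with vertices on the unit circle or at the origin (`cross_pt_pos`,
`cross_zero_pos`). As `m_ζ` and `M_ζ` are asymmetric, the complement in the trivial partition is
computed by `σ_w ∘ σ_u = σ_v` on some `a_{ζ'}` with `m_{ζ'}` below `u` (`compl_triv`), where `σ_v`
is the full cycle of `a_{ζ'}` (`triv_succ`).

If `u = m_ζ`, then `ζ' = ζ` and `σ_u` is the identity on `a_ζ`, so `σ_w` is the full cycle and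
`a_ζ` is contained in one part of `w`. If `u = M_ζ`, then `ζ' = z_m` with `1 ≤ m ≤ n`, and `u`
cuts `a_{ζ'}` into `{0, z_{m+1}, …, z_n}` and `{z_{n+1}, …, z_{n+m}}`; hence `σ_w` joins `0` to
`z_{n+1}` and fixes every other point of `a_{ζ'}` (`sigma_w`). In both cases `w` refines `M_{ζ'}`,
so its parts meeting `a_{ζ'}` are contained in `a_{ζ'}`, and the remaining parts are recovered
from `μ_e`-invariance, because the rotates of `a_{ζ'} ∖ {0}` by `μ_e` partition `μ_{en}`
(`sector_disjoint`, `sector_cover`). The statements on double complements follow by composing.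
-/

open Set

noncomputable section
open scoped Classical

/-! ### Points on the unit circle -/

/-- The point `ζ_N ^ k ζ`, the `k`-th point counterclockwise after `ζ` on the unit circle. -/
def pt (N : ℕ) (ζ : ℂ) (k : ℕ) : ℂ := zeta N ^ k * ζ

/-- Twice the signed area of the triangle `a b c`, positive when it is counterclockwise. -/
def cross (a b c : ℂ) : ℝ :=
  (b - a).re * (c - a).im - (b - a).im * (c - a).re

lemma cross_rot (a b c : ℂ) : cross a b c = cross b c a := by
  simp only [cross, Complex.sub_re, Complex.sub_im]; ring

lemma cross_swap (a b c : ℂ) : cross a b c = - cross a c b := by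
  simp only [cross]; ring

lemma root_ne_zero {N : ℕ} (hN : 0 < N) {ζ : ℂ} (hζ : ζ ^ N = 1) : ζ ≠ 0 := by
  rintro rfl
  rw [zero_pow hN.ne'] at hζ
  exact zero_ne_one hζ

lemma pt_add (N : ℕ) (ζ : ℂ) (j k : ℕ) : pt N (pt N ζ j) k = pt N ζ (j + k) := by
  simp only [pt, pow_add]; ring

lemma pt_root {N : ℕ} (hN : 0 < N) {ζ : ℂ} (hζ : ζ ^ N = 1) (k : ℕ) : pt N ζ k ^ N = 1 := by
  rw [pt, mul_pow, hζ, mul_one, ← pow_mul, mul_comm, pow_mul, (zeta_prim hN).pow_eq_one, one_pow]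

lemma pt_ne_zero {N : ℕ} (hN : 0 < N) {ζ : ℂ} (hζ : ζ ^ N = 1) (k : ℕ) : pt N ζ k ≠ 0 :=
  root_ne_zero hN (pt_root hN hζ k)

lemma pt_inj {N : ℕ} (hN : 0 < N) {ζ : ℂ} (hζ : ζ ^ N = 1) {j k : ℕ}
    (h : pt N ζ j = pt N ζ k) (h1 : j < k + N) (h2 : k < j + N) : j = k := by
  have h' : zeta N ^ j = zeta N ^ k := mul_right_cancel₀ (root_ne_zero hN hζ) h
  have hm : j ≡ k [MOD N] := by
    have h0 : zeta N ≠ 0 := (zeta_prim hN).ne_zero hN.ne'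
    have h'' : Units.mk0 _ h0 ^ j = Units.mk0 _ h0 ^ k := Units.ext (by simpa using h')
    have := pow_eq_pow_iff_modEq.1 h''
    rwa [← orderOf_units, Units.val_mk0, ← (zeta_prim hN).eq_orderOf] at this
  rcases le_total j k with hjk | hjk
  · obtain ⟨c, hc⟩ := (Nat.modEq_iff_dvd' hjk).1 hm
    have : c < 1 := by
      by_contra hc1
      have : N * 1 ≤ N * c := Nat.mul_le_mul_left _ (by omega)
      omega
    obtain rfl : c = 0 := by omega
    omega
  · obtain ⟨c, hc⟩ := (Nat.modEq_iff_dvd' hjk).1 hm.symm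
    have : c < 1 := by
      by_contra hc1
      have : N * 1 ≤ N * c := Nat.mul_le_mul_left _ (by omega)
      omega
    obtain rfl : c = 0 := by omega
    omega

lemma pt_exp {N : ℕ} (hN : 0 < N) {ζ : ℂ} (hζ : ζ ^ N = 1) :
    ∃ φ : ℝ, ∀ k : ℕ,
      pt N ζ k = Complex.exp (((φ + k * (2 * Real.pi / N) : ℝ) : ℂ) * Complex.I) := by
  obtain ⟨c, -, hc⟩ := (haveI : NeZero N := ⟨hN.ne'⟩; (zeta_prim hN).eq_pow_of_pow_eq_one hζ)
  refine ⟨c * (2 * Real.pi / N), fun k => ?_⟩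
  rw [pt, ← hc, zeta, ← Complex.exp_nat_mul, ← Complex.exp_nat_mul, ← Complex.exp_add]
  congr 1
  push_cast
  ring

/-- The orientation of three points on the unit circle is read off from their arguments: twice
the area of the triangle is `4 sin p sin q sin (p + q)`, with `2p` and `2q` the successive
angular gaps. -/
lemma trig_pos {x y z : ℝ} (h1 : x < y) (h2 : y < z) (h3 : z < x + 2 * Real.pi) :
    0 < cross (Complex.exp ((x : ℂ) * Complex.I)) (Complex.exp ((y : ℂ) * Complex.I))
      (Complex.exp ((z : ℂ) * Complex.I)) := by
  obtain ⟨p, rfl⟩ : ∃ p, x = y - 2 * p := ⟨(y - x) / 2, by ring⟩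
  obtain ⟨q, rfl⟩ : ∃ q, z = y + 2 * q := ⟨(z - y) / 2, by ring⟩
  have hp := Real.sin_pos_of_pos_of_lt_pi (x := p) (by linarith) (by linarith)
  have hq := Real.sin_pos_of_pos_of_lt_pi (x := q) (by linarith) (by linarith)
  have hpq := Real.sin_pos_of_pos_of_lt_pi (x := p + q) (by linarith) (by linarith)
  have key : cross (Complex.exp (((y - 2 * p : ℝ) : ℂ) * Complex.I))
      (Complex.exp ((y : ℂ) * Complex.I)) (Complex.exp (((y + 2 * q : ℝ) : ℂ) * Complex.I))
      = 4 * (Real.sin p * Real.sin q * Real.sin (p + q)) := by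
    simp only [cross, Complex.sub_re, Complex.sub_im, Complex.exp_ofReal_mul_I_re,
      Complex.exp_ofReal_mul_I_im, Real.cos_sub, Real.sin_sub, Real.cos_add, Real.sin_add,
      Real.cos_two_mul, Real.sin_two_mul]
    have e1 : Real.cos p ^ 2 = 1 - Real.sin p ^ 2 := Real.cos_sq' p
    have e2 : Real.cos q ^ 2 = 1 - Real.sin q ^ 2 := Real.cos_sq' q
    have e3 : Real.cos y ^ 2 = 1 - Real.sin y ^ 2 := Real.cos_sq' y
    grind
  rw [key]
  positivity

lemma cross_pt_pos {N : ℕ} (hN : 0 < N) {ζ : ℂ} (hζ : ζ ^ N = 1) {i j k : ℕ}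
    (h1 : i < j) (h2 : j < k) (h3 : k < i + N) :
    0 < cross (pt N ζ i) (pt N ζ j) (pt N ζ k) := by
  obtain ⟨φ, hφ⟩ := pt_exp hN hζ
  have hN' : (0 : ℝ) < N := by exact_mod_cast hN
  have ht : 0 < 2 * Real.pi / N := by positivity
  have htN : N * (2 * Real.pi / N) = 2 * Real.pi := by field_simp
  have h1' : (i : ℝ) < j := by exact_mod_cast h1
  have h2' : (j : ℝ) < k := by exact_mod_cast h2
  have h3' : (k : ℝ) < i + N := by exact_mod_cast h3
  rw [hφ, hφ, hφ]
  apply trig_pos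
  · have := mul_lt_mul_of_pos_right h1' ht; linarith
  · have := mul_lt_mul_of_pos_right h2' ht; linarith
  · have := mul_lt_mul_of_pos_right h3' ht; linarith

lemma cross_zero_pos {N : ℕ} (hN : 0 < N) {ζ : ℂ} (hζ : ζ ^ N = 1) {i j : ℕ}
    (h1 : i < j) (h2 : 2 * (j - i) < N) :
    0 < cross 0 (pt N ζ i) (pt N ζ j) := by
  obtain ⟨φ, hφ⟩ := pt_exp hN hζ
  have hN' : (0 : ℝ) < N := by exact_mod_cast hN
  have ht : 0 < 2 * Real.pi / N := by positivity
  have htN : N * (2 * Real.pi / N) = 2 * Real.pi := by field_simp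
  have h1' : (i : ℝ) < j := by exact_mod_cast h1
  have h2' : 2 * ((j : ℝ) - i) < N := by
    have : 2 * j < N + 2 * i := by omega
    have : 2 * (j : ℝ) < N + 2 * i := by exact_mod_cast this
    linarith
  have key : cross 0 (pt N ζ i) (pt N ζ j) = Real.sin ((j - i) * (2 * Real.pi / N)) := by
    rw [hφ, hφ]
    simp only [cross, sub_zero, Complex.exp_ofReal_mul_I_re, Complex.exp_ofReal_mul_I_im]
    rw [show ((j : ℝ) - i) * (2 * Real.pi / N)
      = (φ + j * (2 * Real.pi / N)) - (φ + i * (2 * Real.pi / N)) by ring, Real.sin_sub]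
    ring
  rw [key]
  apply Real.sin_pos_of_pos_of_lt_pi
  · have : (0 : ℝ) < j - i := by linarith
    positivity
  · have := mul_lt_mul_of_pos_right h2' ht; linarith

/-! ### Counterclockwise successors in `a_ζ` -/

lemma ccwSucc_unique {b : Set ℂ} {z z' z'' : ℂ} (h : ccwSucc b z z') (h' : ccwSucc b z z'') :
    z' = z'' := by
  by_contra hne
  have h1 := h.2.2.2 z'' h'.2.1 h'.2.2.1.symm (Ne.symm hne)
  have h2 := h'.2.2.2 z' h.2.1 h.2.2.1.symm hne
  linarith

lemma ccwSucc_mono {a b : Set ℂ} {z z' : ℂ} (h : ccwSucc a z z') (hba : b ⊆ a) (hz : z ∈ b)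
    (hz' : z' ∈ b) : ccwSucc b z z' :=
  ⟨hz, hz', h.2.2.1, fun w hw => h.2.2.2 w (hba hw)⟩

lemma mem_azeta {e n : ℕ} {ζ z : ℂ} :
    z ∈ azeta e n ζ ↔ z = 0 ∨ ∃ k, 1 ≤ k ∧ k ≤ n ∧ z = pt (e * n) ζ k := Iff.rfl

lemma two_mul_le {e : ℕ} (he : 2 ≤ e) (n : ℕ) : 2 * n ≤ e * n := Nat.mul_le_mul_right n he

/-- The only part of `M_ζ` that contains `0` is its asymmetric part. -/
lemma zero_mem_Mzeta {e n : ℕ} {ζ : ℂ} (he : 2 ≤ e) {b : Set ℂ} (hb : b ∈ Mzeta e n ζ)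
    (h0 : (0 : ℂ) ∈ b) : b = azeta e n ζ := by
  rcases hb with rfl | ⟨c, hc, -, rfl⟩
  · rfl
  · obtain ⟨y, ⟨-, hy0⟩, hy⟩ := h0
    rcases mul_eq_zero.1 hy with h | h
    · exact absurd h (root_ne_zero (by omega) hc)
    · exact absurd h hy0

section
variable {e n : ℕ} {ζ : ℂ} (he : 2 ≤ e) (hn : 0 < n) (hζ : ζ ^ (e * n) = 1)
include he hn hζ

lemma succ_zero : ccwSucc (azeta e n ζ) 0 (pt (e * n) ζ 1) := by
  have hN := two_mul_le he n
  have hN0 : 0 < e * n := by omega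
  refine ⟨Or.inl rfl, Or.inr ⟨1, le_rfl, hn, rfl⟩, (pt_ne_zero hN0 hζ 1).symm, ?_⟩
  rintro w hw h0 h1
  obtain rfl | ⟨k, hk1, hk2, rfl⟩ := mem_azeta.1 hw
  · exact absurd rfl h0
  have : k ≠ 1 := by rintro rfl; exact h1 rfl
  exact cross_zero_pos hN0 hζ (i := 1) (j := k) (by omega) (by omega)

lemma succ_pt {k : ℕ} (hk1 : 1 ≤ k) (hk2 : k < n) :
    ccwSucc (azeta e n ζ) (pt (e * n) ζ k) (pt (e * n) ζ (k + 1)) := by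
  have hN := two_mul_le he n
  have hN0 : 0 < e * n := by omega
  refine ⟨Or.inr ⟨k, hk1, hk2.le, rfl⟩, Or.inr ⟨k + 1, by omega, hk2, rfl⟩, fun h => ?_, ?_⟩
  · have := pt_inj hN0 hζ h (by omega) (by omega); omega
  rintro w hw h0 h1
  change 0 < cross _ _ _
  obtain rfl | ⟨j, hj1, hj2, rfl⟩ := mem_azeta.1 hw
  · rw [← cross_rot]
    exact cross_zero_pos hN0 hζ (by omega) (by omega)
  have : j ≠ k := by rintro rfl; exact h0 rfl
  have : j ≠ k + 1 := by rintro rfl; exact h1 rfl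
  rcases lt_or_gt_of_ne ‹j ≠ k› with h | h
  · rw [← cross_rot]
    exact cross_pt_pos hN0 hζ h (by omega) (by omega)
  · exact cross_pt_pos hN0 hζ (by omega) (by omega) (by omega)

lemma succ_last : ccwSucc (azeta e n ζ) (pt (e * n) ζ n) 0 := by
  have hN := two_mul_le he n
  have hN0 : 0 < e * n := by omega
  refine ⟨Or.inr ⟨n, hn, le_rfl, rfl⟩, Or.inl rfl, pt_ne_zero hN0 hζ n, ?_⟩
  rintro w hw h0 h1
  change 0 < cross _ _ _
  obtain rfl | ⟨k, hk1, hk2, rfl⟩ := mem_azeta.1 hw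
  · exact absurd rfl h1
  have : k ≠ n := by rintro rfl; exact h0 rfl
  rw [cross_rot]
  exact cross_zero_pos hN0 hζ (by omega) (by omega)

lemma self_notMem_azeta : ζ ∉ azeta e n ζ := by
  have hN := two_mul_le he n
  have hN0 : 0 < e * n := by omega
  intro h
  obtain h | ⟨k, hk1, hk2, h⟩ := mem_azeta.1 h
  · exact root_ne_zero hN0 hζ h
  · have := pt_inj hN0 hζ (j := 0) (k := k) (by simpa [pt] using h) (by omega) (by omega)
    omega

/-- The rotates of `a_ζ ∖ {0}` by nontrivial `e`-th roots of unity are disjoint from `a_ζ`. -/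
lemma sector_disjoint {c : ℂ} (hc : c ^ e = 1) (hc1 : c ≠ 1) {z : ℂ} (hz : z ∈ azeta e n ζ)
    (hz' : z ∈ (fun z => c * z) '' (azeta e n ζ \ {0})) : False := by
  have hN := two_mul_le he n
  have hN0 : 0 < e * n := by omega
  have he0 : 0 < e := by omega
  obtain ⟨y, ⟨hy, hy0⟩, rfl⟩ := hz'
  obtain rfl | ⟨k, hk1, hk2, rfl⟩ := mem_azeta.1 hy
  · exact hy0 rfl
  obtain ⟨j, hj, rfl⟩ := (haveI : NeZero e := ⟨he0.ne'⟩
    ((zeta_prim hN0).pow hN0 (mul_comm e n)).eq_pow_of_pow_eq_one hc)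
  have hj0 : j ≠ 0 := by rintro rfl; simp at hc1
  have e1 : (zeta (e * n) ^ n) ^ j * pt (e * n) ζ k = pt (e * n) ζ (n * j + k) := by
    rw [pt, pt, pow_add, pow_mul]; ring
  simp only [e1] at hz
  obtain h | ⟨k', hk1', hk2', h⟩ := mem_azeta.1 hz
  · exact pt_ne_zero hN0 hζ _ h
  have h2 : n * j + n ≤ e * n := by
    have : n * (j + 1) ≤ n * e := Nat.mul_le_mul_left n hj
    rw [mul_comm e n]; linarith
  have h3 : n * 1 ≤ n * j := Nat.mul_le_mul_left n (by omega)
  have := pt_inj hN0 hζ h (by omega) (by omega)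
  omega

/-- Every point of `μ_{en}` lies in a rotate of `a_ζ ∖ {0}` by an `e`-th root of unity. -/
lemma sector_cover {y : ℂ} (hy : y ^ (e * n) = 1) :
    ∃ c : ℂ, c ^ e = 1 ∧ ∃ k, 1 ≤ k ∧ k ≤ n ∧ y = c * pt (e * n) ζ k := by
  have hN := two_mul_le he n
  have hN0 : 0 < e * n := by omega
  have hζ0 := root_ne_zero hN0 hζ
  obtain ⟨i, hi, hiy⟩ := (haveI : NeZero (e * n) := ⟨hN0.ne'⟩
    (zeta_prim hN0).eq_pow_of_pow_eq_one (ξ := y / ζ) (by rw [div_pow, hy, hζ, div_one]))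
  -- Shifting the exponent `i` by `e * n` makes `i + e * n - 1` a natural number, whose residue
  -- mod `n` determines the position in the sector.
  refine ⟨zeta (e * n) ^ (n * ((i + e * n - 1) / n)), ?_, (i + e * n - 1) % n + 1, by omega,
    Nat.mod_lt _ hn, ?_⟩
  · rw [← pow_mul, show n * ((i + e * n - 1) / n) * e = e * n * ((i + e * n - 1) / n) by ring,
      pow_mul, (zeta_prim hN0).pow_eq_one, one_pow]
  · rw [pt, ← mul_assoc, ← pow_add, ← add_assoc, Nat.div_add_mod,
      show i + e * n - 1 + 1 = i + e * n by omega, pow_add, (zeta_prim hN0).pow_eq_one, hiy]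
    field_simp

/-! ### The three cases of the complement in the trivial partition -/

lemma mzeta_asymm : ¬ SymmPart (mzeta e n ζ) := by
  have hN := two_mul_le he n
  have hN0 : 0 < e * n := by omega
  have hζ0 := root_ne_zero hN0 hζ
  rintro (h | ⟨a, ⟨hne, b, hb, rfl⟩, h0⟩)
  · rcases h with h | ⟨z, hz, -, h⟩
    · have : ζ ∈ ({0} : Set ℂ) := by rw [h]; simp
      exact hζ0 this
    · have : (0 : ℂ) ∈ ({z} : Set ℂ) := h ▸ rfl
      exact root_ne_zero hN0 hz this.symm
  · rcases hb with rfl | ⟨z, hz, -, rfl⟩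
    · have : ({0, ζ} : Set ℂ) \ {0} = {ζ} := by
        ext x; simp only [mem_sdiff, mem_insert_iff, mem_singleton_iff]; grind
      rw [this, convexHull_singleton] at h0
      exact hζ0 h0.symm
    · have hz0 := root_ne_zero hN0 hz
      have : ({z} : Set ℂ) \ {0} = {z} := by
        ext x; simp only [mem_sdiff, mem_singleton_iff]; grind
      rw [this, convexHull_singleton] at h0
      exact hz0 h0.symm

/-- Each rotate of `a_ζ ∖ {0}` lies in an open half-plane, so its hull misses the origin. -/
lemma zero_notMem_hull {c : ℂ} (hc : c ≠ 0) :
    (0 : ℂ) ∉ convexHull ℝ ((fun z => c * z) '' (azeta e n ζ \ {0})) := by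
  have hN := two_mul_le he n
  have hN0 : 0 < e * n := by omega
  obtain ⟨φ, hφ⟩ := pt_exp hN0 hζ
  intro h0
  -- The half-plane is bounded by the line through `0` half a step clockwise of `ζ_{en} c ζ`.
  let d : ℂ := c⁻¹ *
    Complex.exp (((-(φ + 1 / 2 * (2 * Real.pi / (e * n : ℕ))) : ℝ) : ℂ) * Complex.I)
  have hlin : IsLinearMap ℝ (fun z : ℂ => (z * d).im) := by
    constructor
    · intro x y; simp [add_mul]
    · intro r x; simp [mul_assoc]
  have hsub : ((fun z => c * z) '' (azeta e n ζ \ {0})) ⊆ {z : ℂ | 0 < (z * d).im} := by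
    rintro _ ⟨y, ⟨hy, hy0⟩, rfl⟩
    obtain rfl | ⟨k, hk1, hk2, rfl⟩ := mem_azeta.1 hy
    · exact absurd rfl hy0
    have hN' : (0 : ℝ) < (e * n : ℕ) := by exact_mod_cast hN0
    have e1 : c * pt (e * n) ζ k * d =
        Complex.exp (((k - 1 / 2 : ℝ) * (2 * Real.pi / (e * n : ℕ)) : ℝ) * Complex.I) := by
      rw [hφ, show ∀ A B : ℂ, c * A * (c⁻¹ * B) = A * B from fun A B => by field_simp,
        ← Complex.exp_add]
      congr 1
      push_cast
      ring
    have ht : 0 < 2 * Real.pi / (e * n : ℕ) := by positivity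
    have htN : (e * n : ℕ) * (2 * Real.pi / (e * n : ℕ)) = 2 * Real.pi := by field_simp
    have hk1' : (1 : ℝ) ≤ k := by exact_mod_cast hk1
    have hk2' : 2 * (k : ℝ) ≤ (e * n : ℕ) := by
      have : 2 * k ≤ e * n := by omega
      exact_mod_cast this
    change 0 < (c * pt (e * n) ζ k * d).im
    rw [e1, Complex.exp_ofReal_mul_I_im]
    apply Real.sin_pos_of_pos_of_lt_pi
    · exact mul_pos (by linarith) ht
    · have : ((k : ℝ) - 1 / 2) * 2 < (e * n : ℕ) := by linarith
      have := mul_lt_mul_of_pos_right this ht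
      linarith
  have := convexHull_min hsub (convex_halfSpace_gt hlin 0) h0
  simp at this

lemma Mzeta_asymm : ¬ SymmPart (Mzeta e n ζ) := by
  have hN := two_mul_le he n
  have hN0 : 0 < e * n := by omega
  rintro (h | ⟨a, ⟨hne, b, hb, rfl⟩, h0⟩)
  · have h' := zero_mem_Mzeta he h rfl
    have : pt (e * n) ζ 1 ∈ ({0} : Set ℂ) := by
      rw [h']; exact Or.inr ⟨1, le_rfl, hn, rfl⟩
    exact pt_ne_zero hN0 hζ 1 this
  · rcases hb with rfl | ⟨c, hc, -, rfl⟩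
    · have := zero_notMem_hull he hn hζ one_ne_zero
      simp only [one_mul, image_id'] at this
      exact this h0
    · exact zero_notMem_hull he hn hζ (root_ne_zero (by omega) hc)
        (convexHull_mono sdiff_subset h0)

end

/-- For an asymmetric `u`, the complement in the trivial partition is computed by the third
case of the definition. The second case would force the trivial partition to refine some
`M_{ζ'}`, but `ζ' ∉ a_{ζ'}`. -/
lemma compl_triv {e n : ℕ} (he : 2 ≤ e) (hn : 0 < n) {u w : Set (Set ℂ)}
    (hu : ¬ SymmPart u) (h : IsComplEE e n u (trivEE e n) w) :
    ∃ ζ' : ℂ, ζ' ^ (e * n) = 1 ∧ Refines (mzeta e n ζ') u ∧ Refines w (Mzeta e n ζ') ∧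
      KrewRel (azeta e n ζ') (resTo (azeta e n ζ') u) (resTo (azeta e n ζ') (trivEE e n))
          (resTo (azeta e n ζ') w) := by
  rcases h with ⟨-, h | ⟨-, ζ', hζ', h, -⟩ | ⟨-, h⟩⟩
  · exact absurd h.1 hu
  · obtain ⟨b, hb, hsub⟩ := h _ rfl
    have hb' := zero_mem_Mzeta he hb (hsub (Or.inl rfl))
    exact absurd (hb' ▸ hsub (Or.inr hζ')) (self_notMem_azeta he hn hζ')
  · exact h

/-! ### Successor maps of restricted partitions -/

lemma part_unique {X : Set ℂ} {w : Set (Set ℂ)} (hw : IsPartitionOf X w) {a b : Set ℂ} {z : ℂ}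
    (ha : a ∈ w) (hb : b ∈ w) (hza : z ∈ a) (hzb : z ∈ b) : a = b :=
  (hw.2 z ((hw.1 a ha).2 hza)).unique ⟨ha, hza⟩ ⟨hb, hzb⟩

/-- The successor of `z` in a part of `u` restricted to `A` determines the value at `z` of any
successor map of that restriction. -/
lemma succ_eq {A b : Set ℂ} {u : Set (Set ℂ)} {σ : ℂ → ℂ} (h : IsSuccMapOn (resTo A u) σ)
    (hb : b ∈ u) {z z' : ℂ} (hs : ccwSucc (b ∩ A) z z') : σ z = z' := by
  have hne : b ∩ A ≠ {z} := fun h' => by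
    have : z' ∈ ({z} : Set ℂ) := h' ▸ hs.2.1
    exact hs.2.2.1 this.symm
  exact ccwSucc_unique ((h _ ⟨⟨z, hs.1⟩, b, hb, rfl⟩ z hs.1).2 hne) hs

lemma succ_fix {A b : Set ℂ} {u : Set (Set ℂ)} {σ : ℂ → ℂ} (h : IsSuccMapOn (resTo A u) σ)
    (hb : b ∈ u) {z : ℂ} (hs : b ∩ A = {z}) : σ z = z := by
  have hz : z ∈ b ∩ A := hs ▸ rfl
  exact (h _ ⟨⟨z, hz⟩, b, hb, rfl⟩ z hz).1 hs

lemma succ_mem_s13 {A b : Set ℂ} {u : Set (Set ℂ)} {σ : ℂ → ℂ} (h : IsSuccMapOn (resTo A u) σ)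
    (hb : b ∈ u) {z : ℂ} (hz : z ∈ b) (hzA : z ∈ A) : σ z ∈ b := by
  by_cases hs : b ∩ A = {z}
  · rwa [succ_fix h hb hs]
  · exact ((h (b ∩ A) ⟨⟨z, hz, hzA⟩, b, hb, rfl⟩ z ⟨hz, hzA⟩).2 hs).2.1.1

lemma succ_fix_inv {A b : Set ℂ} {u : Set (Set ℂ)} {σ : ℂ → ℂ} (h : IsSuccMapOn (resTo A u) σ)
    (hb : b ∈ u) {z : ℂ} (hz : z ∈ b) (hzA : z ∈ A) (hσ : σ z = z) : b ∩ A = {z} := by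
  by_contra hs
  exact ((h (b ∩ A) ⟨⟨z, hz, hzA⟩, b, hb, rfl⟩ z ⟨hz, hzA⟩).2 hs).2.2.1 hσ.symm

lemma flat_rotate {e : ℕ} {w : Set (Set ℂ)} (hw : MuInvariant e (flatNCP w)) {s : Set ℂ}
    (hs : s ∈ flatNCP w) {c : ℂ} (hc : c ^ e = 1) :
    (fun z => c * z) '' s ∈ flatNCP w := by
  rw [← hw c hc]
  exact ⟨s, hs, rfl⟩

section
variable {e n : ℕ} {ζ : ℂ} (he : 2 ≤ e) (hn : 0 < n) (hζ : ζ ^ (e * n) = 1)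
include he hn hζ

lemma azeta_subset : azeta e n ζ ⊆ insert 0 (mu (e * n)) := by
  intro z hz
  obtain rfl | ⟨k, -, -, rfl⟩ := mem_azeta.1 hz
  · exact Or.inl rfl
  · exact Or.inr (pt_root (by have := two_mul_le he n; omega) hζ k)

/-- The successor map of the restriction of the trivial partition to `a_ζ` is the
cycle `0 → ζ_{en} ζ → ⋯ → ζ_{en} ^ n ζ → 0`. -/
lemma triv_succ {σ : ℂ → ℂ} (h : IsSuccMapOn (resTo (azeta e n ζ) (trivEE e n)) σ) :
    σ 0 = pt (e * n) ζ 1 ∧ (∀ k, 1 ≤ k → k < n → σ (pt (e * n) ζ k) = pt (e * n) ζ (k + 1)) ∧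
      σ (pt (e * n) ζ n) = 0 := by
  have hi : insert 0 (mu (e * n)) ∩ azeta e n ζ = azeta e n ζ :=
    inter_eq_right.2 (azeta_subset he hn hζ)
  refine ⟨succ_eq h rfl ?_, fun k hk1 hk2 => succ_eq h rfl ?_, succ_eq h rfl ?_⟩
  · rw [hi]; exact succ_zero he hn hζ
  · rw [hi]; exact succ_pt he hn hζ hk1 hk2
  · rw [hi]; exact succ_last he hn hζ

/-! ### The complement of `m_ζ` -/

theorem compl_mzeta {w : Set (Set ℂ)} (hw : w ∈ NCPee e n)
    (h : IsComplEE e n (mzeta e n ζ) (trivEE e n) w) : w = Mzeta e n ζ := by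
  have hN := two_mul_le he n
  have hN0 : 0 < e * n := by omega
  obtain ⟨ζ', hζ', hm, hwM, -, -, σu, σv, σw, hu, hv, hws, hcomp⟩ :=
    compl_triv he hn (mzeta_asymm he hn hζ) h
  obtain rfl : ζ' = ζ := by
    obtain ⟨b, hb, hsub⟩ := hm _ (Or.inl rfl)
    have h0 : (0 : ℂ) ∈ b := hsub (by simp)
    have h1 : ζ' ∈ b := hsub (by simp)
    have hz' := root_ne_zero hN0 hζ'
    rcases hb with rfl | ⟨z, hz, -, rfl⟩
    · simpa [hz'] using h1
    · exact absurd (h1.trans h0.symm) hz'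
  obtain ⟨hv0, hvk, -⟩ := triv_succ he hn hζ hv
  obtain ⟨hpart, -, hinv⟩ := hw
  have hself := self_notMem_azeta he hn hζ
  have hu0 : σu 0 = 0 := by
    refine succ_fix hu (Or.inl rfl) ?_
    ext x
    simp only [mem_inter_iff, mem_insert_iff, mem_singleton_iff]
    constructor
    · rintro ⟨rfl | rfl, hx⟩
      · rfl
      · exact absurd hx hself
    · rintro rfl
      exact ⟨Or.inl rfl, Or.inl rfl⟩
  have huk : ∀ k, 1 ≤ k → k ≤ n → σu (pt (e * n) ζ' k) = pt (e * n) ζ' k := by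
    intro k hk1 hk2
    have hmem : pt (e * n) ζ' k ∈ azeta e n ζ' := Or.inr ⟨k, hk1, hk2, rfl⟩
    exact succ_fix hu (Or.inr ⟨_, pt_root hN0 hζ k, fun h' => hself (by rwa [h'] at hmem), rfl⟩)
      (inter_eq_left.2 (singleton_subset_iff.2 hmem))
  obtain ⟨b, ⟨hb, h0b⟩, -⟩ := hpart.2 0 (Or.inl rfl)
  -- The part of `0` is closed under the cycle of the trivial partition.
  have hbk : ∀ k, 1 ≤ k → k ≤ n → pt (e * n) ζ' k ∈ b := by
    intro k hk1
    induction k, hk1 using Nat.le_induction with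
    | base =>
      intro _
      have := succ_mem_s13 hws hb h0b (Or.inl rfl)
      rwa [show σw 0 = pt (e * n) ζ' 1 by
        rw [← hv0, ← hcomp 0 (Or.inl rfl), hu0]] at this
    | succ k hk ih =>
      intro hk2
      have hmem : pt (e * n) ζ' k ∈ azeta e n ζ' := Or.inr ⟨k, hk, by omega, rfl⟩
      have := succ_mem_s13 hws hb (ih (by omega)) hmem
      rwa [show σw (pt (e * n) ζ' k) = pt (e * n) ζ' (k + 1) by
        rw [← hvk k hk (by omega), ← hcomp _ hmem, huk k hk (by omega)]] at this
  have hba : b = azeta e n ζ' := by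
    apply subset_antisymm
    · obtain ⟨c, hc, hbc⟩ := hwM b hb
      rwa [zero_mem_Mzeta he hc (hbc h0b)] at hbc
    · intro z hz
      obtain rfl | ⟨k, hk1, hk2, rfl⟩ := mem_azeta.1 hz
      · exact h0b
      · exact hbk k hk1 hk2
  subst hba
  have hp1 : pt (e * n) ζ' 1 ∈ azeta e n ζ' := Or.inr ⟨1, le_rfl, hn, rfl⟩
  have hp1' : pt (e * n) ζ' 1 ∈ azeta e n ζ' \ {0} := ⟨hp1, pt_ne_zero hN0 hζ 1⟩
  have hMw : Mzeta e n ζ' ⊆ w := by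
    rintro _ (rfl | ⟨c, hc, hc1, rfl⟩)
    · exact hb
    · obtain ⟨-, s, hs, hs'⟩ := flat_rotate hinv ⟨⟨_, hp1'⟩, _, hb, rfl⟩ hc
      have hmem : c * pt (e * n) ζ' 1 ∈ (fun z => c * z) '' (azeta e n ζ' \ {0}) :=
        ⟨_, hp1', rfl⟩
      by_cases h0 : (0 : ℂ) ∈ s
      · obtain rfl := part_unique hpart hs hb h0 h0b
        have : c * pt (e * n) ζ' 1 ∈ azeta e n ζ' \ {0} := hs' ▸ hmem
        exact (sector_disjoint he hn hζ hc hc1 this.1 hmem).elim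
      · rw [hs', sdiff_singleton_eq_self h0]
        exact hs
  refine subset_antisymm (fun a ha => ?_) hMw
  obtain ⟨c, hc, hac⟩ := hwM a ha
  obtain ⟨z, hz⟩ := (hpart.1 a ha).1
  rwa [part_unique hpart ha (hMw hc) hz (hac hz)]

/-! ### The complement of `M_ζ` -/

/-- The key computation for `M_ζ`. A minimal element `m_{ζ'}` below `M_ζ` has
`ζ' = ζ_{en} ^ m ζ` with `1 ≤ m ≤ n`, and the composition relation on `a_{ζ'}` makes `σ_w` fix
every point except `0` and `ζ_{en} ^ (n + 1) ζ`. -/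
lemma sigma_w {m : ℕ} (hm1 : 1 ≤ m) (hm2 : m ≤ n) {σu σv σw : ℂ → ℂ}
    (hu : IsSuccMapOn (resTo (azeta e n (pt (e * n) ζ m)) (Mzeta e n ζ)) σu)
    (hv : IsSuccMapOn (resTo (azeta e n (pt (e * n) ζ m)) (trivEE e n)) σv)
    (hcomp : ∀ z ∈ azeta e n (pt (e * n) ζ m), σw (σu z) = σv z) :
    σw 0 = pt (e * n) ζ (n + 1) ∧
      ∀ j, m < j → j ≤ m + n → j ≠ n + 1 → σw (pt (e * n) ζ j) = pt (e * n) ζ j := by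
  have hN := two_mul_le he n
  have hN0 : 0 < e * n := by omega
  have hζ' := pt_root hN0 hζ m
  have hmemA : ∀ j, m < j → j ≤ m + n → pt (e * n) ζ j ∈ azeta e n (pt (e * n) ζ m) :=
    fun j h1 h2 => Or.inr ⟨j - m, by omega, by omega, by
      change _ = pt (e * n) (pt (e * n) ζ m) (j - m)
      rw [pt_add, Nat.add_sub_cancel' h1.le]⟩
  have hA : ∀ z, z ∈ azeta e n (pt (e * n) ζ m) →
      z = 0 ∨ ∃ j, m < j ∧ j ≤ m + n ∧ z = pt (e * n) ζ j := by
    intro z hz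
    obtain rfl | ⟨k, hk1, hk2, rfl⟩ := mem_azeta.1 hz
    · exact Or.inl rfl
    · exact Or.inr ⟨m + k, by omega, by omega, pt_add _ _ _ _⟩
  have hmema : ∀ j, 1 ≤ j → j ≤ n → pt (e * n) ζ j ∈ azeta e n ζ :=
    fun j h1 h2 => Or.inr ⟨j, h1, h2, rfl⟩
  -- The two parts of `M_ζ` that meet `a_{ζ'}` are `a_ζ` and `C`.
  set C : Set ℂ := (fun z => zeta (e * n) ^ n * z) '' (azeta e n ζ \ {0}) with hC
  have hCM : C ∈ Mzeta e n ζ := by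
    refine Or.inr ⟨zeta (e * n) ^ n, ?_, ?_, rfl⟩
    · rw [← pow_mul, mul_comm n e, (zeta_prim hN0).pow_eq_one]
    · exact (zeta_prim hN0).pow_ne_one_of_pos_of_lt (by omega) (by omega)
  have hmemC : ∀ j, n < j → j ≤ 2 * n → pt (e * n) ζ j ∈ C := by
    intro j h1 h2
    refine ⟨pt (e * n) ζ (j - n), ⟨hmema _ (by omega) (by omega), pt_ne_zero hN0 hζ _⟩, ?_⟩
    simp only [pt]
    rw [← mul_assoc, ← pow_add, Nat.add_sub_cancel' h1.le]
  have hC' : ∀ z ∈ C, ∃ j, n < j ∧ j ≤ 2 * n ∧ z = pt (e * n) ζ j := by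
    rintro _ ⟨y, ⟨hy, hy0⟩, rfl⟩
    obtain rfl | ⟨k, hk1, hk2, rfl⟩ := mem_azeta.1 hy
    · exact absurd rfl hy0
    · exact ⟨n + k, by omega, by omega, by simp only [pt, pow_add]; ring⟩
  have haM : azeta e n ζ ∈ Mzeta e n ζ := Or.inl rfl
  obtain ⟨hv0, hvk, hvn⟩ := triv_succ he hn hζ' hv
  simp only [pt_add] at hv0 hvk hvn
  have hvk' : ∀ j, m < j → j < m + n → σv (pt (e * n) ζ j) = pt (e * n) ζ (j + 1) := by
    intro j h1 h2
    have := hvk (j - m) (by omega) (by omega)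
    rwa [← add_assoc, Nat.add_sub_cancel' h1.le] at this
  have hsk : ∀ j, m < j → j < m + n → ccwSucc (azeta e n (pt (e * n) ζ m))
      (pt (e * n) ζ j) (pt (e * n) ζ (j + 1)) := by
    intro j h1 h2
    have := succ_pt he hn hζ' (k := j - m) (by omega) (by omega)
    rwa [pt_add, pt_add, ← add_assoc, Nat.add_sub_cancel' h1.le] at this
  have hs0 := succ_zero he hn hζ'
  rw [pt_add] at hs0
  have hu0 : m < n → σu 0 = pt (e * n) ζ (m + 1) := fun hmn =>
    succ_eq hu haM (ccwSucc_mono hs0 inter_subset_right ⟨Or.inl rfl, Or.inl rfl⟩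
      ⟨hmema _ (by omega) (by omega), hmemA _ (by omega) (by omega)⟩)
  have hua : ∀ j, m < j → j < n → σu (pt (e * n) ζ j) = pt (e * n) ζ (j + 1) := fun j h1 h2 =>
    succ_eq hu haM (ccwSucc_mono (hsk j h1 (by omega)) inter_subset_right
      ⟨hmema _ (by omega) (by omega), hmemA _ (by omega) (by omega)⟩
      ⟨hmema _ (by omega) (by omega), hmemA _ (by omega) (by omega)⟩)
  have hun : m < n → σu (pt (e * n) ζ n) = 0 := fun hmn =>
    succ_eq hu haM (ccwSucc_mono (succ_last he hn hζ) inter_subset_left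
      ⟨hmema _ (by omega) (by omega), hmemA _ (by omega) (by omega)⟩ ⟨Or.inl rfl, Or.inl rfl⟩)
  have huC : ∀ j, n < j → j < m + n → σu (pt (e * n) ζ j) = pt (e * n) ζ (j + 1) :=
    fun j h1 h2 => succ_eq hu hCM (ccwSucc_mono (hsk j (by omega) h2) inter_subset_right
      ⟨hmemC _ (by omega) (by omega), hmemA _ (by omega) (by omega)⟩
      ⟨hmemC _ (by omega) (by omega), hmemA _ (by omega) (by omega)⟩)
  have hu0' : m = n → σu 0 = 0 := by
    intro hmn
    refine succ_fix hu haM (subset_antisymm ?_ ?_)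
    · rintro z ⟨hz1, hz2⟩
      obtain h | ⟨j, hj1, hj2, rfl⟩ := hA z hz2
      · exact h
      obtain h | ⟨k, hk1, hk2, h⟩ := mem_azeta.1 hz1
      · exact h
      have := pt_inj hN0 hζ h (by omega) (by omega)
      omega
    · rintro _ rfl
      exact ⟨Or.inl rfl, Or.inl rfl⟩
  constructor
  · rcases hm2.lt_or_eq with hmn | hmn
    · rw [← hun hmn, hcomp _ (hmemA n hmn (by omega)), hvk' n hmn (by omega)]
    · have := hcomp 0 (Or.inl rfl)
      rw [hu0' hmn, hv0, hmn] at this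
      exact this
  · intro j h1 h2 h3
    obtain ⟨k, rfl⟩ : ∃ k, j = k + 1 := ⟨j - 1, by omega⟩
    rcases (Nat.lt_succ_iff.1 h1).eq_or_lt with rfl | hmk
    · have hmn : m < n := by omega
      have := hcomp 0 (Or.inl rfl)
      rwa [hu0 hmn, hv0] at this
    · have := hcomp _ (hmemA k hmk (by omega))
      have hσ : σu (pt (e * n) ζ k) = pt (e * n) ζ (k + 1) := by
        rcases lt_or_gt_of_ne (show k ≠ n by omega) with h | h
        · exact hua k hmk h
        · exact huC k h (by omega)
      rwa [hσ, hvk' k hmk (by omega)] at this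

theorem compl_Mzeta {w : Set (Set ℂ)} (hw : w ∈ NCPee e n)
    (h : IsComplEE e n (Mzeta e n ζ) (trivEE e n) w) :
    w = mzeta e n (zeta (e * n) ^ (n + 1) * ζ) := by
  change w = mzeta e n (pt (e * n) ζ (n + 1))
  have hN := two_mul_le he n
  have hN0 : 0 < e * n := by omega
  obtain ⟨ζ', hζ', hm, hwM, -, -, σu, σv, σw, hu, hv, hws, hcomp⟩ :=
    compl_triv he hn (Mzeta_asymm he hn hζ) h
  obtain ⟨m, hm1, hm2, rfl⟩ : ∃ m, 1 ≤ m ∧ m ≤ n ∧ ζ' = pt (e * n) ζ m := by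
    obtain ⟨b, hb, hsub⟩ := hm _ (Or.inl rfl)
    have hb' := zero_mem_Mzeta he hb (hsub (by simp))
    have h1 : ζ' ∈ azeta e n ζ := hb' ▸ hsub (by simp)
    exact (mem_azeta.1 h1).resolve_left (root_ne_zero hN0 hζ')
  obtain ⟨hσ0, hσj⟩ := sigma_w he hn hζ hm1 hm2 hu hv hcomp
  obtain ⟨hpart, -, hinv⟩ := hw
  set q := pt (e * n) ζ (n + 1) with hq
  set A := azeta e n (pt (e * n) ζ m) with hAdef
  have hq0 : q ≠ 0 := pt_ne_zero hN0 hζ _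
  have hfix : ∀ z ∈ A, z ≠ 0 → z ≠ q → σw z = z := by
    intro z hz hz0 hzq
    obtain rfl | ⟨k, hk1, hk2, rfl⟩ := mem_azeta.1 hz
    · exact absurd rfl hz0
    rw [pt_add] at hzq ⊢
    exact hσj _ (by omega) (by omega) (fun h => hzq (by rw [h]))
  obtain ⟨b, ⟨hb, h0b⟩, -⟩ := hpart.2 0 (Or.inl rfl)
  have hqb : q ∈ b := hσ0 ▸ succ_mem_s13 hws hb h0b (Or.inl rfl)
  have hbA : b ⊆ A := by
    obtain ⟨c, hc, hbc⟩ := hwM b hb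
    rwa [zero_mem_Mzeta he hc (hbc h0b)] at hbc
  have hbeq : b = {0, q} := by
    refine subset_antisymm (fun z hz => ?_) ?_
    · by_contra hne
      simp only [mem_insert_iff, mem_singleton_iff, not_or] at hne
      have := succ_fix_inv hws hb hz (hbA hz) (hfix z (hbA hz) hne.1 hne.2)
      have h0 : (0 : ℂ) ∈ ({z} : Set ℂ) := this ▸ ⟨h0b, Or.inl rfl⟩
      exact hne.1 h0.symm
    · rintro z (rfl | rfl)
      · exact h0b
      · exact hqb
  have hflat : ∀ z ∈ A, z ≠ 0 → {z} ∈ flatNCP w := by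
    intro z hz hz0
    refine ⟨⟨z, rfl⟩, ?_⟩
    by_cases hzq : z = q
    · refine ⟨b, hb, ?_⟩
      rw [hbeq, hzq]
      ext x
      simp only [mem_sdiff, mem_insert_iff, mem_singleton_iff]
      grind
    obtain ⟨s, ⟨hs, hzs⟩, -⟩ := hpart.2 z (azeta_subset he hn hζ' hz)
    have hsA := succ_fix_inv hws hs hzs hz (hfix z hz hz0 hzq)
    have hss : s = {z} := by
      obtain ⟨c, hc, hsc⟩ := hwM s hs
      rcases hc with rfl | ⟨c, hc, hc1, rfl⟩
      · rw [← hsA, inter_eq_left.2 hsc]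
      · exact (sector_disjoint he hn hζ' hc hc1 hz (hsc hzs)).elim
    refine ⟨s, hs, ?_⟩
    rw [hss, sdiff_singleton_eq_self (by simpa using hz0.symm)]
  have hmw : mzeta e n q ⊆ w := by
    rintro _ (rfl | ⟨y, hy, hyq, rfl⟩)
    · exact hbeq ▸ hb
    · obtain ⟨c, hc, k, hk1, hk2, rfl⟩ := sector_cover he hn hζ' hy
      obtain ⟨-, s, hs, hs'⟩ := flat_rotate hinv
        (hflat _ (Or.inr ⟨k, hk1, hk2, rfl⟩) (pt_ne_zero hN0 hζ' k)) hc
      rw [image_singleton] at hs'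
      change {c * pt (e * n) (pt (e * n) ζ m) k} = s \ {0} at hs'
      by_cases h0 : (0 : ℂ) ∈ s
      · have hsb := part_unique hpart hs hb h0 h0b
        have : q ∈ s \ {0} := ⟨hsb ▸ hqb, hq0⟩
        rw [← hs'] at this
        exact absurd (show q = _ from this).symm hyq
      · rw [hs', sdiff_singleton_eq_self h0]
        exact hs
  refine subset_antisymm (fun a ha => ?_) hmw
  obtain ⟨z, hz⟩ := (hpart.1 a ha).1
  obtain ⟨c, hc, hzc⟩ : ∃ c ∈ mzeta e n q, z ∈ c := by
    rcases (hpart.1 a ha).2 hz with rfl | hz'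
    · exact ⟨_, Or.inl rfl, Or.inl rfl⟩
    · by_cases hzq : z = q
      · exact ⟨_, Or.inl rfl, Or.inr hzq⟩
      · exact ⟨_, Or.inr ⟨z, hz', hzq, rfl⟩, rfl⟩
  rwa [part_unique hpart ha (hmw hc) hz hzc]

end

/-- In `NCP(e,e,n+1)`, the complement of the minimal asymmetric element `m_ζ`
in the trivial partition is the maximal asymmetric element `M_ζ`, and the
complement of `M_ζ` is `ζ_{en}^{n+1} m_ζ`. Consequently, for a minimal or
maximal asymmetric element `x`, the double complement is `ζ_{en}^{n+1} x`. -/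
theorem stmt13 (e n : ℕ) (he : 2 ≤ e) (hn : 0 < n) (ζ : ℂ)
    (hζ : ζ ^ (e * n) = 1) :
    (∀ w ∈ NCPee e n,
       IsComplEE e n (mzeta e n ζ) (trivEE e n) w → w = Mzeta e n ζ) ∧
    (∀ w ∈ NCPee e n,
       IsComplEE e n (Mzeta e n ζ) (trivEE e n) w →
       w = mzeta e n (zeta (e * n) ^ (n + 1) * ζ)) ∧
    (∀ w ∈ NCPee e n, ∀ w' ∈ NCPee e n,
       IsComplEE e n (mzeta e n ζ) (trivEE e n) w →
       IsComplEE e n w (trivEE e n) w' →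
       w' = mzeta e n (zeta (e * n) ^ (n + 1) * ζ)) ∧
    (∀ w ∈ NCPee e n, ∀ w' ∈ NCPee e n,
       IsComplEE e n (Mzeta e n ζ) (trivEE e n) w →
       IsComplEE e n w (trivEE e n) w' →
       w' = Mzeta e n (zeta (e * n) ^ (n + 1) * ζ)) := by
  have hζ2 : (zeta (e * n) ^ (n + 1) * ζ) ^ (e * n) = 1 :=
    pt_root (by have := two_mul_le he n; omega) hζ (n + 1)
  refine ⟨fun w hw h => compl_mzeta he hn hζ hw h, fun w hw h => compl_Mzeta he hn hζ hw h,
    fun w hw w' hw' h h' => ?_, fun w hw w' hw' h h' => ?_⟩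
  · obtain rfl := compl_mzeta he hn hζ hw h
    exact compl_Mzeta he hn hζ hw' h'
  · obtain rfl := compl_Mzeta he hn hζ hw h
    exact compl_mzeta he hn hζ2 hw' h'
end
end
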